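/- Let α ∈ (0,1), let n ≥ 1 and m ≥ 1 be integers, let μ, ν ≥ 0 be integers with μ + ν = m, and let I = {(i,j) ∈ ℕ² : i + j ≤ m − 1}. Let a : ℂ × (I → ℂⁿ) → ℂⁿ be continuously differentiable (in the real sense) and such that on every bounded subset of ℂ × (I → ℂⁿ) its first-order partial derivatives have finite α-Hölder constant. Then for any choice of vectors c_{i,j} ∈ ℂⁿ for (i,j) ∈ I, there exist R > 0 and a map u : ℂ → ℂⁿ which is m times continuously differentiable on a neighborhood of the closed disk D = {z ∈ ℂ : |z| ≤ R}, whose m-th order Wirtinger derivatives ∂^i∂̄^j u (i + j = m) each have finite α-Hölder constant on D, such that ∂^μ∂̄^ν u(z) = a(z, (∂^i∂̄^j u(z))_{(i,j)∈I}) for all z ∈ D, and ∂^i∂̄^j u(0) = c_{i,j} for all (i,j) ∈ I. -/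

import Mathlib

open Complex MeasureTheory Metric ENNReal NNReal

noncomputable section

/-- Wirtinger derivative `∂` for vector-valued maps (componentwise for `E = Fin n → ℂ`). -/
def wDv {E : Type*} [NormedAddCommGroup E] [NormedSpace ℂ E] (f : ℂ → E) : ℂ → E := fun z =>
  (2 : ℂ)⁻¹ • (fderiv ℝ f z 1 - Complex.I • fderiv ℝ f z Complex.I)

/-- Wirtinger derivative `∂̄` for vector-valued maps. -/
def wDbarv {E : Type*} [NormedAddCommGroup E] [NormedSpace ℂ E] (f : ℂ → E) : ℂ → E := fun z =>
  (2 : ℂ)⁻¹ • (fderiv ℝ f z 1 + Complex.I • fderiv ℝ f z Complex.I)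

/-- Iterated Wirtinger derivative `∂^i ∂̄^j`. -/
def wDijv {E : Type*} [NormedAddCommGroup E] [NormedSpace ℂ E] (i j : ℕ) (f : ℂ → E) :
    ℂ → E := wDv^[i] (wDbarv^[j] f)

/-- α-Hölder constant of `f` on `A`, valued in `ℝ≥0∞`. -/
def HolV {E : Type*} [NormedAddCommGroup E] (α : ℝ) (A : Set ℂ) (f : ℂ → E) : ℝ≥0∞ :=
  ⨆ z ∈ A, ⨆ z' ∈ A, ⨆ _ : z ≠ z', (‖f z - f z'‖₊ : ℝ≥0∞) / (‖z - z'‖₊ : ℝ≥0∞) ^ α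

/-- The index set `I = {(i,j) : i + j ≤ m − 1}` of derivatives of order `< m`. -/
abbrev Idx (m : ℕ) := {p : Fin m × Fin m // (p.1 : ℕ) + (p.2 : ℕ) < m}

end

/-!
Convolution with the kernels `±(1/π) w̄ ^ p / w ^ (p + 1)`, `p : ℤ`, inverts the Cauchy-Riemann
operators: the transforms `T p` satisfy `∂ (T p f) = ∂̄ (T (p + 1) f)`, this being `f` itself for
`p = -1`. For Lipschitz `f` with compact support one may differentiate `f` under the integral, and
in polar coordinates this identity is the fundamental theorem of calculus along rays and circles,
without singular integrals. Hence `T (i - μ) f`, up to constants, is a consistent choice of the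
derivatives `∂^i ∂̄^(m - 1 - i) u` of a solution `u` of `∂^μ ∂̄^ν u = f`. All lower derivatives, and
`u`, are recovered by repeatedly integrating the closed forms `∂v dz + ∂̄v dz̄` from the origin,
where any values may be prescribed, so that the jet of `u` at the origin is exact for every `f`.

The right-hand side `f` has to solve `f = χ • a(z, jet of u)` with a cutoff `χ` supported in a disk
of radius `ρ`. On the functions supported there with a fixed bound and Lipschitz constant, this map
is a contraction for the sup norm when `ρ` is small, as the jet gains a factor `ρ`. Being a
transform of the bounded function `∂̄f`, each top order derivative of `u` is Hölder continuous.
-/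

open scoped ComplexConjugate Topology

section Kernel

/-- The kernels `±(1/π) (w̄ ^ p) / w ^ (p + 1)`, `p : ℤ`. They interpolate between the Cauchy kernel
`1 / (π w)` at `p = 0`, a fundamental solution of `∂̄`, and its conjugate `1 / (π w̄)` at `p = -1`,
a fundamental solution of `∂`; the signs are chosen so that `∂` of the `p`-th kernel is `∂̄` of the
`(p + 1)`-st one. -/
noncomputable def cauchyKernel (p : ℤ) (w : ℂ) : ℂ :=
  (if 0 ≤ p then 1 else -1) * (-(conj w / w)) ^ p * (Real.pi * w)⁻¹

lemma norm_conj_div_self {w : ℂ} (hw : w ≠ 0) : ‖conj w / w‖ = 1 := by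
  rw [norm_div, RCLike.norm_conj, div_self (norm_ne_zero_iff.2 hw)]

lemma norm_conj_div_sub_le {a b : ℂ} (ha : a ≠ 0) (hb : b ≠ 0) :
    ‖conj a / a - conj b / b‖ ≤ 2 * ‖a - b‖ / ‖a‖ := by
  have split : conj a / a - conj b / b = conj (a - b) / a + conj b / b * ((b - a) / a) := by
    rw [map_sub]
    field_simp
    ring
  calc ‖conj a / a - conj b / b‖ ≤ ‖conj (a - b) / a‖ + ‖conj b / b * ((b - a) / a)‖ :=
        split ▸ norm_add_le _ _
    _ = 2 * ‖a - b‖ / ‖a‖ := by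
        rw [norm_mul, norm_conj_div_self hb, norm_div, norm_div, RCLike.norm_conj,
          norm_sub_rev b a]
        ring

lemma norm_pow_sub_pow_le_of_norm_eq_one {𝕜 : Type*} [NormedField 𝕜] {x y : 𝕜} (hx : ‖x‖ = 1)
    (hy : ‖y‖ = 1) (k : ℕ) : ‖x ^ k - y ^ k‖ ≤ k * ‖x - y‖ := by
  induction k with
  | zero => simp
  | succ k ih =>
    calc ‖x ^ (k + 1) - y ^ (k + 1)‖ = ‖(x ^ k - y ^ k) * x + y ^ k * (x - y)‖ := by ring_nf
      _ ≤ ‖x ^ k - y ^ k‖ + ‖x - y‖ := by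
          simpa [hx, hy] using norm_add_le ((x ^ k - y ^ k) * x) (y ^ k * (x - y))
      _ ≤ (k + 1 : ℕ) * ‖x - y‖ := by push_cast; linarith

lemma norm_zpow_sub_zpow_le_of_norm_eq_one {𝕜 : Type*} [NormedField 𝕜] {x y : 𝕜} (hx : ‖x‖ = 1)
    (hy : ‖y‖ = 1) (p : ℤ) : ‖x ^ p - y ^ p‖ ≤ |p| * ‖x - y‖ := by
  rcases p with k | k
  · simpa using norm_pow_sub_pow_le_of_norm_eq_one hx hy k
  · have hx0 : x ≠ 0 := norm_ne_zero_iff.1 (by simp [hx])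
    have hy0 : y ≠ 0 := norm_ne_zero_iff.1 (by simp [hy])
    have h := dist_inv_inv₀ (pow_ne_zero (k + 1) hx0) (pow_ne_zero (k + 1) hy0)
    rw [dist_eq_norm, dist_eq_norm, norm_pow, norm_pow, hx, hy, one_pow, mul_one, div_one] at h
    have habs : |Int.negSucc k| = (k + 1 : ℕ) := by rw [Int.abs_eq_natAbs, Int.natAbs_negSucc]
    rw [zpow_negSucc, zpow_negSucc, h, habs]
    exact_mod_cast norm_pow_sub_pow_le_of_norm_eq_one hx hy (k + 1)

lemma norm_cauchyKernel (p : ℤ) (w : ℂ) : ‖cauchyKernel p w‖ = Real.pi⁻¹ * ‖w‖⁻¹ := by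
  rcases eq_or_ne w 0 with rfl | hw
  · simp [cauchyKernel]
  · have hsign : ‖(if 0 ≤ p then 1 else -1 : ℂ)‖ = 1 := by split_ifs <;> simp
    rw [cauchyKernel, norm_mul, norm_mul, hsign, norm_zpow, norm_neg, norm_conj_div_self hw]
    simp [abs_of_pos Real.pi_pos, mul_comm]

lemma measurable_cauchyKernel (p : ℤ) : Measurable (cauchyKernel p) := by
  unfold cauchyKernel
  fun_prop

/-- The kernels `|w|⁻² (w̄ / w) ^ k`, homogeneous of degree `-2`. The derivatives of the kernels
`cauchyKernel p` are multiples of these, so that the cancellation between the first derivatives of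
different Cauchy transforms reduces to integrals against them. -/
noncomputable def angularKernel (k : ℤ) (w : ℂ) : ℂ := (‖w‖ ^ 2 : ℂ)⁻¹ * (conj w / w) ^ k

lemma mul_angularKernel_add_one (k : ℤ) (w : ℂ) :
    w * angularKernel (k + 1) w = conj w * angularKernel k w := by
  rcases eq_or_ne w 0 with rfl | hw
  · simp
  · have hne : conj w / w ≠ 0 := by simpa using hw
    rw [angularKernel, angularKernel, zpow_add_one₀ hne]
    field_simp

lemma cauchyKernel_eq_mul_angularKernel (p : ℤ) (w : ℂ) : cauchyKernel p w =
    (if 0 ≤ p then 1 else -1) * (-1) ^ p * Real.pi⁻¹ * (w * angularKernel (p + 1) w) := by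
  rcases eq_or_ne w 0 with rfl | hw
  · simp [cauchyKernel]
  · have hne : conj w / w ≠ 0 := by simpa using hw
    have hw' : conj w ≠ 0 := by simpa using hw
    have hinv : (Real.pi * w : ℂ)⁻¹ = Real.pi⁻¹ * (w * ((conj w * w)⁻¹ * (conj w / w))) := by
      rw [ofReal_inv]
      field_simp
    rw [cauchyKernel, angularKernel, zpow_add_one₀ hne, ← conj_mul', neg_eq_neg_one_mul (_ / _),
      mul_zpow, hinv]
    ring

lemma cauchyKernel_add_one_of_ne_neg_one {p : ℤ} (hp : p ≠ -1) (w : ℂ) : cauchyKernel (p + 1) w =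
    -((if 0 ≤ p then 1 else -1) * (-1) ^ p * Real.pi⁻¹ * (conj w * angularKernel (p + 1) w)) := by
  have hsign : 0 ≤ p + 1 ↔ 0 ≤ p := by omega
  rw [cauchyKernel_eq_mul_angularKernel, mul_angularKernel_add_one,
    zpow_add_one₀ (by norm_num)]
  simp only [hsign]
  ring

lemma cauchyKernel_zero (w : ℂ) : cauchyKernel 0 w = Real.pi⁻¹ * (conj w * angularKernel 0 w) := by
  rw [cauchyKernel_eq_mul_angularKernel, mul_angularKernel_add_one]
  simp

lemma cauchyKernel_neg_one (w : ℂ) : cauchyKernel (-1) w = Real.pi⁻¹ * (w * angularKernel 0 w) := by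
  rw [cauchyKernel_eq_mul_angularKernel]
  norm_num

lemma norm_cauchyKernel_sub_le {a b : ℂ} (ha : a ≠ 0) (hb : b ≠ 0) (p : ℤ) :
    ‖cauchyKernel p a - cauchyKernel p b‖ ≤
      (2 * |p| + 1) * Real.pi⁻¹ * (‖a - b‖ * (‖a‖⁻¹ * ‖b‖⁻¹)) := by
  set x := -(conj a / a) with hx
  set y := -(conj b / b) with hy
  have hx1 : ‖x‖ = 1 := by rw [hx, norm_neg, norm_conj_div_self ha]
  have hy1 : ‖y‖ = 1 := by rw [hy, norm_neg, norm_conj_div_self hb]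
  have hxy : ‖x ^ p - y ^ p‖ ≤ |p| * (2 * ‖a - b‖ / ‖a‖) := by
    refine (norm_zpow_sub_zpow_le_of_norm_eq_one hx1 hy1 p).trans ?_
    gcongr
    rw [hx, hy, ← neg_sub', norm_neg]
    exact norm_conj_div_sub_le ha hb
  have hsign : ‖(if 0 ≤ p then 1 else -1 : ℂ)‖ = 1 := by split_ifs <;> simp
  have split : cauchyKernel p a - cauchyKernel p b = (if 0 ≤ p then 1 else -1) *
      (Real.pi⁻¹ * ((x ^ p - y ^ p) * b⁻¹ + x ^ p * (a⁻¹ - b⁻¹))) := by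
    simp only [cauchyKernel, mul_inv, ofReal_inv, hx, hy]
    ring
  have hinv : ‖a⁻¹ - b⁻¹‖ = ‖a - b‖ / (‖a‖ * ‖b‖) := by
    simpa only [dist_eq_norm] using dist_inv_inv₀ ha hb
  rw [split, norm_mul, hsign, one_mul, norm_mul, norm_real, Real.norm_of_nonneg (by positivity)]
  calc Real.pi⁻¹ * ‖(x ^ p - y ^ p) * b⁻¹ + x ^ p * (a⁻¹ - b⁻¹)‖
      ≤ Real.pi⁻¹ * (|p| * (2 * ‖a - b‖ / ‖a‖) * ‖b‖⁻¹ + ‖a - b‖ / (‖a‖ * ‖b‖)) := by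
        gcongr
        refine (norm_add_le _ _).trans ?_
        rw [norm_mul, norm_mul, norm_zpow, hx1, one_zpow, one_mul, norm_inv, hinv]
        gcongr
    _ = (2 * |p| + 1) * Real.pi⁻¹ * (‖a - b‖ * (‖a‖⁻¹ * ‖b‖⁻¹)) := by
        field_simp

lemma rpow_mul_add_mul_rpow_le {α x y : ℝ} (hα : 0 ≤ α) (hx : 0 < x) (hy : 0 < y) :
    x ^ α * y + x * y ^ α ≤ x ^ (1 + α) + y ^ (1 + α) := by
  have hmono : 0 ≤ (x - y) * (x ^ α - y ^ α) := by
    rcases le_total x y with h | h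
    · exact mul_nonneg_of_nonpos_of_nonpos (sub_nonpos.2 h)
        (sub_nonpos.2 (Real.rpow_le_rpow hx.le h hα))
    · exact mul_nonneg (sub_nonneg.2 h) (sub_nonneg.2 (Real.rpow_le_rpow hy.le h hα))
  rw [Real.rpow_add hx, Real.rpow_add hy, Real.rpow_one, Real.rpow_one]
  linarith

lemma norm_sub_mul_inv_le_rpow {E : Type*} [NormedAddCommGroup E] {α : ℝ}
    (hα : α ∈ Set.Icc (0 : ℝ) 1) {a b : E} (ha : a ≠ 0) (hb : b ≠ 0) : ‖a - b‖ * (‖a‖⁻¹ * ‖b‖⁻¹) ≤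
      ‖a - b‖ ^ α * (‖a‖ ^ (-(1 + α)) + ‖b‖ ^ (-(1 + α))) := by
  obtain ⟨hα0, hα1⟩ := hα
  have ha' : 0 < ‖a‖ := norm_pos_iff.2 ha
  have hb' : 0 < ‖b‖ := norm_pos_iff.2 hb
  have hsub : ‖a - b‖ ^ (1 - α) ≤ ‖a‖ ^ (1 - α) + ‖b‖ ^ (1 - α) :=
    (Real.rpow_le_rpow (norm_nonneg _) (norm_sub_le a b) (by linarith)).trans
      (Real.rpow_add_le_add_rpow ha'.le hb'.le (by linarith) (by linarith))
  have hpow : ∀ r : ℝ, 0 < r → r ^ (1 - α) * r⁻¹ = r⁻¹ ^ α := fun r hr => by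
    rw [← Real.rpow_neg_one r, ← Real.rpow_add hr, ← Real.rpow_mul hr.le]
    congr 1
    ring
  have hneg : ∀ r : ℝ, 0 < r → r⁻¹ ^ (1 + α) = r ^ (-(1 + α)) := fun r hr => by
    rw [Real.inv_rpow hr.le, Real.rpow_neg hr.le]
  calc ‖a - b‖ * (‖a‖⁻¹ * ‖b‖⁻¹)
      = ‖a - b‖ ^ α * (‖a - b‖ ^ (1 - α) * (‖a‖⁻¹ * ‖b‖⁻¹)) := by
        rw [← mul_assoc (_ ^ α), ← Real.rpow_add_of_nonneg (norm_nonneg _) hα0 (by linarith)]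
        simp
    _ ≤ ‖a - b‖ ^ α * ((‖a‖ ^ (1 - α) + ‖b‖ ^ (1 - α)) * (‖a‖⁻¹ * ‖b‖⁻¹)) := by gcongr
    _ = ‖a - b‖ ^ α * (‖a‖⁻¹ ^ α * ‖b‖⁻¹ + ‖a‖⁻¹ * ‖b‖⁻¹ ^ α) := by
        rw [← hpow _ ha', ← hpow _ hb']
        ring
    _ ≤ ‖a - b‖ ^ α * (‖a‖ ^ (-(1 + α)) + ‖b‖ ^ (-(1 + α))) := by
        rw [← hneg _ ha', ← hneg _ hb']
        exact mul_le_mul_of_nonneg_left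
          (rpow_mul_add_mul_rpow_le hα0 (inv_pos.2 ha') (inv_pos.2 hb')) (by positivity)

lemma norm_cauchyKernel_sub_le_rpow {α : ℝ} (hα : α ∈ Set.Icc (0 : ℝ) 1) (p : ℤ) {a b : ℂ}
    (ha : a ≠ 0) (hb : b ≠ 0) : ‖cauchyKernel p a - cauchyKernel p b‖ ≤
      (2 * |p| + 1) * Real.pi⁻¹ *
        (‖a - b‖ ^ α * (‖a‖ ^ (-(1 + α)) + ‖b‖ ^ (-(1 + α)))) :=
  (norm_cauchyKernel_sub_le ha hb p).trans
    (mul_le_mul_of_nonneg_left (norm_sub_mul_inv_le_rpow hα ha hb) (by positivity))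

lemma integrableOn_closedBall_norm_rpow {β : ℝ} (hβ : β < 2) (s : ℝ) :
    IntegrableOn (fun w : ℂ => ‖w‖ ^ (-β)) (closedBall 0 s) := by
  refine IntegrableOn.mono_set ?_
    (closedBall_subset_ball ((le_abs_self s).trans_lt (lt_add_one |s|)))
  rw [integrableOn_fun_norm_addHaar volume (f := fun r => r ^ (-β)), Complex.finrank_real_complex]
  have h : IntegrableOn (fun r : ℝ => r ^ (1 - β)) (Set.Ioo 0 (|s| + 1)) :=
    (intervalIntegral.integrableOn_Ioo_rpow_iff (by positivity)).2 (by linarith)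
  refine h.congr_fun (fun r hr => ?_) measurableSet_Ioo
  simp only [smul_eq_mul, sub_eq_add_neg, Real.rpow_add hr.1, Real.rpow_one]
  norm_num

lemma integral_closedBall_norm_inv {s : ℝ} (hs : 0 ≤ s) :
    ∫ w in closedBall (0 : ℂ) s, ‖w‖⁻¹ = 2 * Real.pi * s := by
  have hind : (closedBall (0 : ℂ) s).indicator (fun w => ‖w‖⁻¹) =
      fun w => (Set.Iic s).indicator (fun r => r⁻¹) ‖w‖ := by
    ext w
    simp [Set.indicator]
  have hradial :
      ∫ r in Set.Ioi (0 : ℝ), r ^ (2 - 1) • (Set.Iic s).indicator (fun r => r⁻¹) r = s := by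
    calc _ = ∫ r in Set.Ioi (0 : ℝ), (Set.Iic s).indicator (fun _ => 1) r := by
          refine setIntegral_congr_fun measurableSet_Ioi fun r (hr : 0 < r) => ?_
          by_cases h : r ∈ Set.Iic s <;> simp [h, hr.ne']
      _ = s := by
          rw [setIntegral_indicator measurableSet_Iic, Set.Ioi_inter_Iic]
          simp [hs]
  rw [← integral_indicator isClosed_closedBall.measurableSet, hind,
    integral_fun_norm_addHaar volume, Complex.finrank_real_complex, hradial]
  simp [Measure.real, mul_assoc]

end Kernel

section CauchyTransform

lemma support_comp_sub_left_subset {α : Type*} [Zero α] {F : ℂ → α} {ρ t : ℝ} {z : ℂ}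
    (hF : F.support ⊆ closedBall 0 ρ) (hz : ‖z‖ ≤ t) :
    (fun w => F (z - w)).support ⊆ closedBall 0 (t + ρ) := by
  intro w hw
  have h : ‖z - w‖ ≤ ρ := mem_closedBall_zero_iff.1 (hF hw)
  rw [mem_closedBall_zero_iff]
  linarith [norm_le_norm_add_norm_sub z w]

lemma exists_norm_le_of_support_subset_closedBall {X G : Type*} [PseudoMetricSpace X]
    [ProperSpace X] [SeminormedAddCommGroup G] {F : X → G} {x : X} {ρ : ℝ} (hc : Continuous F)
    (hF : F.support ⊆ closedBall x ρ) : ∃ B, ∀ z, ‖F z‖ ≤ B :=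
  (HasCompactSupport.of_support_subset_isCompact (isCompact_closedBall x ρ)
    hF).exists_bound_of_continuous hc

variable {G : Type*} [NormedAddCommGroup G] [NormedSpace ℂ G]

/-- Convolution with the `p`-th kernel `cauchyKernel p`: for `p = 0` it is the solid Cauchy
transform, a right inverse of `∂̄`, and for `p = -1` its conjugate, a right inverse of `∂`. -/
noncomputable def cauchyTransform (p : ℤ) (F : ℂ → G) (z : ℂ) : G :=
  ∫ w, cauchyKernel p w • F (z - w)

lemma norm_cauchyKernel_smul_le (p : ℤ) {F : ℂ → G} {B s : ℝ} (hB : ∀ w, ‖F w‖ ≤ B)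
    (hF : F.support ⊆ closedBall 0 s) (w : ℂ) : ‖cauchyKernel p w • F w‖ ≤
      (closedBall (0 : ℂ) s).indicator (fun w => Real.pi⁻¹ * B * ‖w‖⁻¹) w := by
  by_cases hw : w ∈ closedBall (0 : ℂ) s
  · rw [Set.indicator_of_mem hw, norm_smul, norm_cauchyKernel, mul_right_comm]
    gcongr
    exact hB w
  · rw [Set.indicator_of_notMem hw, Function.notMem_support.1 (mt (@hF w) hw), smul_zero, norm_zero]

lemma integrable_indicator_closedBall_norm_inv (C s : ℝ) :
    Integrable ((closedBall (0 : ℂ) s).indicator (fun w => C * ‖w‖⁻¹)) := by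
  have h : IntegrableOn (fun w : ℂ => ‖w‖⁻¹) (closedBall 0 s) := by
    simpa [Real.rpow_neg_one] using integrableOn_closedBall_norm_rpow one_lt_two s
  exact (integrable_indicator_iff isClosed_closedBall.measurableSet).2 (h.const_mul C)

lemma integrable_cauchyKernel_smul (p : ℤ) {F : ℂ → G} {B s : ℝ} (hm : AEStronglyMeasurable F)
    (hB : ∀ w, ‖F w‖ ≤ B) (hF : F.support ⊆ closedBall 0 s) :
    Integrable (fun w => cauchyKernel p w • F w) :=
  (integrable_indicator_closedBall_norm_inv _ s).mono'
    ((measurable_cauchyKernel p).aestronglyMeasurable.smul hm)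
    (.of_forall (norm_cauchyKernel_smul_le p hB hF))

lemma norm_integral_cauchyKernel_smul_le (p : ℤ) {F : ℂ → G} {B s : ℝ} (hs : 0 ≤ s)
    (hB : ∀ w, ‖F w‖ ≤ B) (hF : F.support ⊆ closedBall 0 s) :
    ‖∫ w, cauchyKernel p w • F w‖ ≤ 2 * s * B :=
  calc ‖∫ w, cauchyKernel p w • F w‖
      ≤ ∫ w, (closedBall (0 : ℂ) s).indicator (fun w => Real.pi⁻¹ * B * ‖w‖⁻¹) w :=
        norm_integral_le_of_norm_le (integrable_indicator_closedBall_norm_inv _ s)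
          (.of_forall (norm_cauchyKernel_smul_le p hB hF))
    _ = 2 * s * B := by
        rw [integral_indicator isClosed_closedBall.measurableSet, integral_const_mul,
          integral_closedBall_norm_inv hs]
        field_simp

lemma integrable_cauchyTransform (p : ℤ) {F : ℂ → G} {B ρ : ℝ} (hm : AEStronglyMeasurable F)
    (hB : ∀ w, ‖F w‖ ≤ B) (hF : F.support ⊆ closedBall 0 ρ) (z : ℂ) :
    Integrable (fun w => cauchyKernel p w • F (z - w)) :=
  integrable_cauchyKernel_smul p
    (hm.comp_quasiMeasurePreserving (quasiMeasurePreserving_sub_left volume z))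
    (fun w => hB (z - w)) (support_comp_sub_left_subset hF le_rfl)

lemma norm_cauchyTransform_le (p : ℤ) {F : ℂ → G} {B ρ : ℝ} (hB : ∀ w, ‖F w‖ ≤ B)
    (hF : F.support ⊆ closedBall 0 ρ) {z : ℂ} (hz : z ∈ closedBall 0 ρ) :
    ‖cauchyTransform p F z‖ ≤ 4 * ρ * B := by
  have hz' : ‖z‖ ≤ ρ := mem_closedBall_zero_iff.1 hz
  have hρ : 0 ≤ ρ := (norm_nonneg z).trans hz'
  refine (norm_integral_cauchyKernel_smul_le p (add_nonneg hρ hρ) (fun w => hB (z - w))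
    (support_comp_sub_left_subset hF hz')).trans_eq ?_
  ring

lemma cauchyTransform_sub (p : ℤ) {F F' : ℂ → G} {z : ℂ}
    (h : Integrable (fun w => cauchyKernel p w • F (z - w)))
    (h' : Integrable (fun w => cauchyKernel p w • F' (z - w))) :
    cauchyTransform p (F - F') z = cauchyTransform p F z - cauchyTransform p F' z := by
  simp only [cauchyTransform, Pi.sub_apply, smul_sub]
  exact integral_sub h h'

lemma norm_cauchyTransform_sub_le_of_lipschitzWith (p : ℤ) {F : ℂ → G} {ρ : ℝ} {L : ℝ≥0}
    (hL : LipschitzWith L F) (hF : F.support ⊆ closedBall 0 ρ) {z z' : ℂ}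
    (hz : z ∈ closedBall 0 ρ) (hz' : z' ∈ closedBall 0 ρ) :
    ‖cauchyTransform p F z - cauchyTransform p F z'‖ ≤ 4 * ρ * L * ‖z - z'‖ := by
  obtain ⟨B, hB⟩ := exists_norm_le_of_support_subset_closedBall hL.continuous hF
  have hint := integrable_cauchyTransform p hL.continuous.aestronglyMeasurable hB hF
  have hsupp : (fun w => F (z - w) - F (z' - w)).support ⊆ closedBall 0 (ρ + ρ) :=
    (Function.support_sub _ _).trans (Set.union_subset
      (support_comp_sub_left_subset hF (mem_closedBall_zero_iff.1 hz))
      (support_comp_sub_left_subset hF (mem_closedBall_zero_iff.1 hz')))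
  have hρ : 0 ≤ ρ := nonempty_closedBall.1 ⟨z, hz⟩
  have hLip : ∀ w, ‖F (z - w) - F (z' - w)‖ ≤ L * ‖z - z'‖ := fun w => by
    simpa using hL.norm_sub_le (z - w) (z' - w)
  calc ‖cauchyTransform p F z - cauchyTransform p F z'‖
      = ‖∫ w, cauchyKernel p w • (F (z - w) - F (z' - w))‖ := by
        simp only [cauchyTransform, smul_sub, integral_sub (hint z) (hint z')]
    _ ≤ 2 * (ρ + ρ) * (L * ‖z - z'‖) :=
        norm_integral_cauchyKernel_smul_le p (add_nonneg hρ hρ) hLip hsupp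
    _ = 4 * ρ * L * ‖z - z'‖ := by ring

lemma norm_cauchyKernel_smul_sub_le {α : ℝ} (hα : α ∈ Set.Icc (0 : ℝ) 1) (p : ℤ) {F : ℂ → G}
    {B ρ r : ℝ} (hB : ∀ w, ‖F w‖ ≤ B) (hF : F.support ⊆ closedBall 0 ρ) {z z' w : ℂ}
    (hz : z ∈ closedBall 0 r) (hz' : z' ∈ closedBall 0 r) (hw : z ≠ w) (hw' : z' ≠ w) :
    ‖cauchyKernel p (z - w) • F w - cauchyKernel p (z' - w) • F w‖ ≤
      (2 * |p| + 1) * Real.pi⁻¹ * B * ‖z - z'‖ ^ α *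
        ((closedBall (0 : ℂ) (r + ρ)).indicator (fun w => ‖w‖ ^ (-(1 + α))) (z - w) +
          (closedBall (0 : ℂ) (r + ρ)).indicator (fun w => ‖w‖ ^ (-(1 + α))) (z' - w)) := by
  by_cases hwF : w ∈ closedBall 0 ρ
  · have hmem : ∀ {x}, x ∈ closedBall (0 : ℂ) r → x - w ∈ closedBall (0 : ℂ) (r + ρ) := fun hx => by
      rw [mem_closedBall_zero_iff] at *
      exact (norm_sub_le _ _).trans (add_le_add hx hwF)
    have hK := norm_cauchyKernel_sub_le_rpow hα p (sub_ne_zero.2 hw) (sub_ne_zero.2 hw')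
    rw [sub_sub_sub_cancel_right] at hK
    rw [Set.indicator_of_mem (hmem hz), Set.indicator_of_mem (hmem hz'), ← sub_smul, norm_smul]
    refine (mul_le_mul hK (hB w) (norm_nonneg _) (by positivity)).trans_eq (by ring)
  · rw [Function.notMem_support.1 (mt (@hF w) hwF), smul_zero, smul_zero, sub_zero, norm_zero]
    have hB0 : 0 ≤ B := (norm_nonneg _).trans (hB w)
    have hind : ∀ x, 0 ≤ (closedBall (0 : ℂ) (r + ρ)).indicator (fun w => ‖w‖ ^ (-(1 + α))) x :=
      Set.indicator_nonneg fun w _ => by positivity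
    have := hind (z - w)
    have := hind (z' - w)
    positivity

lemma exists_norm_cauchyTransform_sub_le_rpow {α : ℝ} (hα : α ∈ Set.Ico (0 : ℝ) 1) (p : ℤ)
    {F : ℂ → G} {B ρ : ℝ} (hm : AEStronglyMeasurable F) (hB : ∀ w, ‖F w‖ ≤ B)
    (hF : F.support ⊆ closedBall 0 ρ) (r : ℝ) :
    ∃ M, ∀ z ∈ closedBall (0 : ℂ) r, ∀ z' ∈ closedBall (0 : ℂ) r,
      ‖cauchyTransform p F z - cauchyTransform p F z'‖ ≤ M * ‖z - z'‖ ^ α := by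
  set g : ℂ → ℝ := (closedBall (0 : ℂ) (r + ρ)).indicator (fun w => ‖w‖ ^ (-(1 + α)))
  have gint : Integrable g := (integrable_indicator_iff isClosed_closedBall.measurableSet).2
    (integrableOn_closedBall_norm_rpow (by linarith [hα.2]) _)
  set C := (2 * |p| + 1) * Real.pi⁻¹ * B
  refine ⟨C * (2 * ∫ w, g w), fun z hz z' hz' => ?_⟩
  have reflect : ∀ x, cauchyTransform p F x = ∫ w, cauchyKernel p (x - w) • F w := fun x => by
    rw [cauchyTransform,
      ← integral_sub_left_eq_self (fun w => cauchyKernel p w • F (x - w)) volume x]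
    simp
  have int_reflect : ∀ x, Integrable (fun w => cauchyKernel p (x - w) • F w) := fun x => by
    simpa using (integrable_cauchyTransform p hm hB hF x).comp_sub_left x
  have hle : ∀ᵐ w, ‖cauchyKernel p (z - w) • F w - cauchyKernel p (z' - w) • F w‖ ≤
      C * ‖z - z'‖ ^ α * (g (z - w) + g (z' - w)) := by
    filter_upwards [volume.ae_ne z, volume.ae_ne z'] with w hw hw'
    exact norm_cauchyKernel_smul_sub_le ⟨hα.1, hα.2.le⟩ p hB hF hz hz' hw.symm hw'.symm
  calc ‖cauchyTransform p F z - cauchyTransform p F z'‖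
      = ‖∫ w, cauchyKernel p (z - w) • F w - cauchyKernel p (z' - w) • F w‖ := by
        rw [reflect, reflect, integral_sub (int_reflect z) (int_reflect z')]
    _ ≤ ∫ w, C * ‖z - z'‖ ^ α * (g (z - w) + g (z' - w)) :=
        norm_integral_le_of_norm_le
          (((gint.comp_sub_left z).add (gint.comp_sub_left z')).const_mul _) hle
    _ = C * (2 * ∫ w, g w) * ‖z - z'‖ ^ α := by
        rw [integral_const_mul, integral_add (gint.comp_sub_left z) (gint.comp_sub_left z'),
          integral_sub_left_eq_self g, integral_sub_left_eq_self g]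
        ring

lemma continuous_cauchyTransform (p : ℤ) {F : ℂ → G} {B ρ : ℝ} (hm : AEStronglyMeasurable F)
    (hB : ∀ w, ‖F w‖ ≤ B) (hF : F.support ⊆ closedBall 0 ρ) : Continuous (cauchyTransform p F) := by
  refine continuous_iff_continuousAt.2 fun z => ?_
  obtain ⟨M, hM⟩ := exists_norm_cauchyTransform_sub_le_rpow (α := 1 / 2) (by norm_num) p hm hB hF
    (‖z‖ + 1)
  have hlim : Filter.Tendsto (fun x : ℂ => M * ‖x - z‖ ^ (1 / 2 : ℝ)) (𝓝 z) (𝓝 0) := by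
    have : Continuous (fun x : ℂ => M * ‖x - z‖ ^ (1 / 2 : ℝ)) := by fun_prop (disch := norm_num)
    simpa using this.tendsto z
  refine tendsto_iff_norm_sub_tendsto_zero.2
    (squeeze_zero' (.of_forall fun _ => norm_nonneg _) ?_ hlim)
  filter_upwards [closedBall_mem_nhds z one_pos] with x hx
  refine hM x ?_ z (by simp)
  rw [mem_closedBall_zero_iff]
  linarith [norm_le_norm_add_norm_sub z x, mem_closedBall_iff_norm'.1 hx]

end CauchyTransform

section WirtingerDerivatives

variable {E : Type*} [NormedAddCommGroup E] [NormedSpace ℂ E]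

/-- The functional `T ↦ (T 1 + s • T i) / 2` on real-linear maps `ℂ → E`: applied to the real
derivative of a map it yields its `∂` for `s = -i` and its `∂̄` for `s = i`. -/
noncomputable def wirtingerPart (s : ℂ) : (ℂ →L[ℝ] E) →L[ℂ] E where
  toFun T := (2 : ℂ)⁻¹ • (T 1 + s • T I)
  map_add' T T' := by
    simp only [add_apply]
    module
  map_smul' k T := by
    simp only [smul_apply, RingHom.id_apply]
    module
  cont := by fun_prop

lemma wirtingerPart_apply (s : ℂ) (T : ℂ →L[ℝ] E) :
    wirtingerPart s T = (2 : ℂ)⁻¹ • (T 1 + s • T I) := rfl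

lemma wDv_eq_wirtingerPart (f : ℂ → E) (z : ℂ) : wDv f z = wirtingerPart (-I) (fderiv ℝ f z) := by
  rw [wDv, wirtingerPart_apply, neg_smul, sub_eq_add_neg]

lemma wDbarv_eq_wirtingerPart (f : ℂ → E) (z : ℂ) : wDbarv f z = wirtingerPart I (fderiv ℝ f z) :=
  rfl

lemma clm_apply_eq_re_smul_add_im_smul (T : ℂ →L[ℝ] E) (v : ℂ) :
    T v = (v.re : ℂ) • T 1 + (v.im : ℂ) • T I := by
  have hv : v = v.re • (1 : ℂ) + v.im • I := by simp [re_add_im]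
  conv_lhs => rw [hv, map_add, map_smul, map_smul]
  simp only [Complex.coe_smul]

lemma smul_wirtingerPart_neg_I (T : ℂ →L[ℝ] E) (w : ℂ) :
    w • wirtingerPart (-I) T = (2 : ℂ)⁻¹ • (T w - I • T (w * I)) := by
  rw [wirtingerPart_apply, clm_apply_eq_re_smul_add_im_smul T w,
    clm_apply_eq_re_smul_add_im_smul T (w * I), mul_I_re, mul_I_im, ofReal_neg]
  conv_lhs => rw [← re_add_im w]
  match_scalars <;> grind [I_sq]

lemma conj_smul_wirtingerPart_I (T : ℂ →L[ℝ] E) (w : ℂ) :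
    conj w • wirtingerPart I T = (2 : ℂ)⁻¹ • (T w + I • T (w * I)) := by
  rw [wirtingerPart_apply, clm_apply_eq_re_smul_add_im_smul T w,
    clm_apply_eq_re_smul_add_im_smul T (w * I), mul_I_re, mul_I_im, ofReal_neg]
  conv_lhs => rw [← re_add_im w, map_add, map_mul, conj_ofReal, conj_ofReal, conj_I]
  match_scalars <;> grind [I_sq]

variable (E) in
/-- The real-linear map `v ↦ v • a + v̄ • b`, that is the differential form `a dz + b dz̄`,
depending linearly on `(a, b)`. It is the real derivative of a map with `∂` equal to `a` and `∂̄`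
equal to `b`. -/
noncomputable def wirtingerForm : E × E →L[ℝ] ℂ →L[ℝ] E :=
  (ContinuousLinearMap.lsmul ℝ ℂ).flip.coprod (ContinuousLinearMap.lsmul ℝ ℂ ∘L conjCLE).flip

lemma wirtingerForm_apply (q : E × E) (v : ℂ) :
    wirtingerForm E q v = v • q.1 + conj v • q.2 := by
  simp [wirtingerForm]

lemma norm_wirtingerForm_le (q : E × E) : ‖wirtingerForm E q‖ ≤ ‖q.1‖ + ‖q.2‖ := by
  refine ContinuousLinearMap.opNorm_le_bound _ (by positivity) fun v => ?_
  rw [wirtingerForm_apply]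
  refine (norm_add_le _ _).trans_eq ?_
  rw [norm_smul, norm_smul, RCLike.norm_conj]
  ring

lemma wirtingerPart_neg_I_wirtingerForm (q : E × E) :
    wirtingerPart (-I) (wirtingerForm E q) = q.1 := by
  simp only [wirtingerPart_apply, wirtingerForm_apply, map_one, conj_I]
  match_scalars <;> grind [I_sq]

lemma wirtingerPart_I_wirtingerForm (q : E × E) :
    wirtingerPart I (wirtingerForm E q) = q.2 := by
  simp only [wirtingerPart_apply, wirtingerForm_apply, map_one, conj_I]
  match_scalars <;> grind [I_sq]

lemma wirtingerForm_wirtingerPart (T : ℂ →L[ℝ] E) :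
    wirtingerForm E (wirtingerPart (-I) T, wirtingerPart I T) = T := by
  ext v
  rw [wirtingerForm_apply, smul_wirtingerPart_neg_I, conj_smul_wirtingerPart_I]
  module

lemma wDv_eq_of_hasFDerivAt {F : ℂ → E} {q : E × E} {z : ℂ}
    (h : HasFDerivAt F (wirtingerForm E q) z) : wDv F z = q.1 := by
  rw [wDv_eq_wirtingerPart, h.fderiv, wirtingerPart_neg_I_wirtingerForm]

lemma wDbarv_eq_of_hasFDerivAt {F : ℂ → E} {q : E × E} {z : ℂ}
    (h : HasFDerivAt F (wirtingerForm E q) z) : wDbarv F z = q.2 := by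
  rw [wDbarv_eq_wirtingerPart, h.fderiv, wirtingerPart_I_wirtingerForm]

lemma wirtingerForm_wDv_wDbarv (F : ℂ → E) (z : ℂ) :
    wirtingerForm E (wDv F z, wDbarv F z) = fderiv ℝ F z := by
  rw [wDv_eq_wirtingerPart, wDbarv_eq_wirtingerPart, wirtingerForm_wirtingerPart]

end WirtingerDerivatives

section CauchyTransformDerivative

variable {E : Type*} [NormedAddCommGroup E] [NormedSpace ℂ E]

lemma support_fderiv_subset_closedBall {f : ℂ → E} {ρ : ℝ} (h0 : f.support ⊆ closedBall 0 ρ) :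
    (fderiv ℝ f).support ⊆ closedBall 0 ρ :=
  (support_fderiv_subset ℝ).trans (closure_minimal h0 isClosed_closedBall)

variable {f : ℂ → E} {ρ : ℝ} {L : ℝ≥0}

lemma norm_cauchyKernel_smul_sub_le_of_lipschitzWith (p : ℤ) (hf : LipschitzWith L f)
    (h0 : f.support ⊆ closedBall 0 ρ) {z x : ℂ} (hx : x ∈ ball z 1) (w : ℂ) :
    ‖cauchyKernel p w • f (x - w) - cauchyKernel p w • f (z - w)‖ ≤
      (closedBall (0 : ℂ) (‖z‖ + 1 + ρ)).indicator (fun w => Real.pi⁻¹ * L * ‖w‖⁻¹) w *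
        ‖x - z‖ := by
  have hxz : ‖x‖ ≤ ‖z‖ + 1 := by
    linarith [norm_le_norm_add_norm_sub z x, mem_ball_iff_norm'.1 hx]
  have hLip : ∀ w, ‖f (x - w) - f (z - w)‖ ≤ L * ‖x - z‖ := fun w => by
    simpa using hf.norm_sub_le (x - w) (z - w)
  have hsupp : (fun w => f (x - w) - f (z - w)).support ⊆ closedBall 0 (‖z‖ + 1 + ρ) :=
    (Function.support_sub _ _).trans (Set.union_subset
      (support_comp_sub_left_subset h0 hxz) (support_comp_sub_left_subset h0 (by linarith)))
  rw [← smul_sub]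
  refine (norm_cauchyKernel_smul_le p hLip hsupp w).trans_eq ?_
  rw [← Set.indicator_mul_const]
  congr 1
  ext w
  ring

variable [FiniteDimensional ℝ E]

lemma integrable_cauchyTransform_fderiv (p : ℤ) (hf : LipschitzWith L f)
    (h0 : f.support ⊆ closedBall 0 ρ) (z : ℂ) :
    Integrable (fun w => cauchyKernel p w • fderiv ℝ f (z - w)) :=
  integrable_cauchyTransform p (measurable_fderiv ℝ f).aestronglyMeasurable
    (fun _ => norm_fderiv_le_of_lipschitz ℝ hf) (support_fderiv_subset_closedBall h0) z

lemma hasFDerivAt_cauchyTransform (p : ℤ) (hf : LipschitzWith L f)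
    (h0 : f.support ⊆ closedBall 0 ρ) (z : ℂ) :
    HasFDerivAt (cauchyTransform p f) (cauchyTransform p (fderiv ℝ f) z) z := by
  obtain ⟨B, hB⟩ := exists_norm_le_of_support_subset_closedBall hf.continuous h0
  have hint := integrable_cauchyTransform p hf.continuous.aestronglyMeasurable hB h0
  have hdiff : ∀ᵐ w, DifferentiableAt ℝ f (z - w) :=
    (quasiMeasurePreserving_sub_left volume z).ae hf.ae_differentiableAt
  refine (hasFDerivAt_integral_of_dominated_loc_of_lip' (ball_mem_nhds z one_pos)
    (fun x _ => (hint x).aestronglyMeasurable) (hint z)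
    (integrable_cauchyTransform_fderiv p hf h0 z).aestronglyMeasurable
    (.of_forall fun w x hx => norm_cauchyKernel_smul_sub_le_of_lipschitzWith p hf h0 hx w)
    (integrable_indicator_closedBall_norm_inv _ _) ?_).2
  filter_upwards [hdiff] with w hw
  exact ((hasFDerivAt_comp_sub w).2 hw.hasFDerivAt).const_smul (cauchyKernel p w)

lemma contDiff_one_cauchyTransform (p : ℤ) (hf : LipschitzWith L f)
    (h0 : f.support ⊆ closedBall 0 ρ) : ContDiff ℝ 1 (cauchyTransform p f) := by
  have h := hasFDerivAt_cauchyTransform p hf h0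
  refine contDiff_one_iff_fderiv.2 ⟨fun z => (h z).differentiableAt, ?_⟩
  rw [funext fun z => (h z).fderiv]
  exact continuous_cauchyTransform p (measurable_fderiv ℝ f).aestronglyMeasurable
    (fun _ => norm_fderiv_le_of_lipschitz ℝ hf) (support_fderiv_subset_closedBall h0)

lemma wirtingerPart_cauchyTransform_fderiv (s : ℂ) (p : ℤ) (hf : LipschitzWith L f)
    (h0 : f.support ⊆ closedBall 0 ρ) (z : ℂ) :
    wirtingerPart s (cauchyTransform p (fderiv ℝ f) z) =
      cauchyTransform p (fun w => wirtingerPart s (fderiv ℝ f w)) z := by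
  simp only [cauchyTransform,
    ← (wirtingerPart s).integral_comp_comm (integrable_cauchyTransform_fderiv p hf h0 z), map_smul]

lemma wDv_cauchyTransform (p : ℤ) (hf : LipschitzWith L f) (h0 : f.support ⊆ closedBall 0 ρ) :
    wDv (cauchyTransform p f) = cauchyTransform p (wDv f) := by
  ext1 z
  rw [wDv_eq_wirtingerPart, (hasFDerivAt_cauchyTransform p hf h0 z).fderiv,
    wirtingerPart_cauchyTransform_fderiv _ p hf h0, funext (wDv_eq_wirtingerPart f)]

lemma wDbarv_cauchyTransform (p : ℤ) (hf : LipschitzWith L f) (h0 : f.support ⊆ closedBall 0 ρ) :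
    wDbarv (cauchyTransform p f) = cauchyTransform p (wDbarv f) := by
  ext1 z
  rw [wDbarv_eq_wirtingerPart, (hasFDerivAt_cauchyTransform p hf h0 z).fderiv,
    wirtingerPart_cauchyTransform_fderiv _ p hf h0]
  rfl

end CauchyTransformDerivative

section Holder

variable {E : Type*} [NormedAddCommGroup E]

lemma HolV_lt_top {α M : ℝ} (hα : 0 ≤ α) {A : Set ℂ} {F : ℂ → E}
    (h : ∀ z ∈ A, ∀ z' ∈ A, ‖F z - F z'‖ ≤ M * ‖z - z'‖ ^ α) : HolV α A F < ⊤ := by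
  have hle : HolV α A F ≤ M.toNNReal := by
    refine iSup₂_le fun z hz => iSup₂_le fun z' hz' => iSup_le fun _ => ?_
    refine ENNReal.div_le_of_le_mul ?_
    rw [← ENNReal.coe_rpow_of_nonneg _ hα, ← ENNReal.coe_mul, ENNReal.coe_le_coe,
      ← NNReal.coe_le_coe, NNReal.coe_mul, NNReal.coe_rpow, coe_nnnorm, coe_nnnorm]
    refine (h z hz z' hz').trans ?_
    gcongr
    exact Real.le_coe_toNNReal M
  exact hle.trans_lt ENNReal.coe_lt_top

lemma HolV_wDbarv_cauchyTransform_lt_top [NormedSpace ℂ E] [FiniteDimensional ℝ E] {α : ℝ}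
    (hα : α ∈ Set.Ico (0 : ℝ) 1) (p : ℤ) {f : ℂ → E} {ρ : ℝ} {L : ℝ≥0} (hf : LipschitzWith L f)
    (h0 : f.support ⊆ closedBall 0 ρ) (r : ℝ) :
    HolV α (closedBall 0 r) (wDbarv (cauchyTransform p f)) < ⊤ := by
  have hm : AEStronglyMeasurable (wDbarv f) :=
    (wirtingerPart I).continuous.comp_aestronglyMeasurable
      (measurable_fderiv ℝ f).aestronglyMeasurable
  have hB : ∀ z, ‖wDbarv f z‖ ≤ ‖(wirtingerPart I : (ℂ →L[ℝ] E) →L[ℂ] E)‖ * L := fun z =>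
    (wirtingerPart I).le_opNorm_of_le (norm_fderiv_le_of_lipschitz ℝ hf)
  have hsupp : (wDbarv f).support ⊆ closedBall 0 ρ :=
    (Function.support_comp_subset (map_zero (wirtingerPart I)) _).trans
      (support_fderiv_subset_closedBall h0)
  rw [wDbarv_cauchyTransform p hf h0]
  obtain ⟨M, hM⟩ :=
    exists_norm_cauchyTransform_sub_le_rpow hα p hm hB hsupp r
  exact HolV_lt_top hα.1 hM

end Holder

section LipschitzIntegrals

variable {E : Type*} [NormedAddCommGroup E] [NormedSpace ℝ E] [FiniteDimensional ℝ E]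

lemma integral_deriv_eq_sub_of_lipschitzWith {f : ℝ → E} {L : ℝ≥0} (hf : LipschitzWith L f)
    (a b : ℝ) : ∫ x in a..b, deriv f x = f b - f a := by
  have hint : IntervalIntegrable (deriv f) volume a b :=
    (intervalIntegrable_const (c := (L : ℝ))).mono_fun (aestronglyMeasurable_deriv f _)
      (.of_forall fun x => by simpa using norm_deriv_le_of_lipschitz hf)
  refine (SeparatingDual.eq_iff_forall_dual_eq (R := ℝ)).2 fun φ => ?_
  have hφ : AbsolutelyContinuousOnInterval (φ ∘ f) a b :=
    ((φ.lipschitz.comp hf).lipschitzOnWith (s := Set.uIcc a b)).absolutelyContinuousOnInterval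
  rw [← φ.intervalIntegral_comp_comm hint, map_sub]
  refine Eq.trans (intervalIntegral.integral_congr_ae ?_) hφ.integral_deriv_eq_sub
  filter_upwards [hf.ae_differentiableAt_real] with x hx _
  exact (φ.hasFDerivAt.comp_hasDerivAt x hx.hasDerivAt).deriv.symm

lemma integral_Ioi_deriv_of_lipschitzWith {f : ℝ → E} {L : ℝ≥0} {s : ℝ} (hf : LipschitzWith L f)
    (h0 : ∀ r, s < r → f r = 0) : ∫ r in Set.Ioi 0, deriv f r = -f 0 := by
  have hderiv : ∀ r, s < r → deriv f r = 0 := fun r hr =>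
    ((Filter.eventuallyEq_of_mem (Ioi_mem_nhds hr) h0).deriv_eq).trans (deriv_const r 0)
  have ht : s < max s 0 + 1 := (le_max_left s 0).trans_lt (lt_add_one _)
  have hpos : 0 ≤ max s 0 + 1 := by positivity
  rw [setIntegral_eq_of_subset_of_forall_sdiff_eq_zero (s := Set.Ioc 0 (max s 0 + 1))
      measurableSet_Ioi Set.Ioc_subset_Ioi_self, ← intervalIntegral.integral_of_le hpos,
    integral_deriv_eq_sub_of_lipschitzWith hf, h0 _ ht, zero_sub]
  rintro r ⟨hr, hr'⟩
  exact hderiv r (ht.trans (not_le.1 fun h => hr' ⟨hr, h⟩))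

end LipschitzIntegrals

section PolarCoordinates

lemma polarCoord_symm_eq_mul_exp (q : ℝ × ℝ) :
    Complex.polarCoord.symm q = q.1 * exp (q.2 * I) := by
  rw [Complex.polarCoord_symm_apply, exp_mul_I]
  simp

lemma ae_restrict_polarCoord_target {P : ℂ → Prop} (h : ∀ᵐ w, P w) :
    ∀ᵐ q ∂(volume : Measure (ℝ × ℝ)).restrict (Set.Ioi 0 ×ˢ Set.Ioo (-Real.pi) Real.pi),
      P (q.1 * exp (q.2 * I)) := by
  obtain ⟨N, hN, hNm, hN0⟩ := exists_measurable_superset_of_null (ae_iff.1 h)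
  have hmeas : Measurable fun q : ℝ × ℝ => (q.1 : ℂ) * exp (q.2 * I) := by fun_prop
  have key := Complex.lintegral_comp_polarCoord_symm (N.indicator fun _ => 1)
  simp only [polarCoord_symm_eq_mul_exp] at key
  have hmeas' : Measurable fun q : ℝ × ℝ =>
      ENNReal.ofReal q.1 • N.indicator (fun _ => (1 : ℝ≥0∞)) (q.1 * exp (q.2 * I)) :=
    (ENNReal.measurable_ofReal.comp measurable_fst).smul
      ((measurable_const.indicator hNm).comp hmeas)
  rw [lintegral_indicator hNm, setLIntegral_const, one_mul, hN0, lintegral_eq_zero_iff hmeas',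
    polarCoord_target] at key
  filter_upwards [key, ae_restrict_mem (measurableSet_Ioi.prod measurableSet_Ioo)] with q hq hq'
  by_contra hP
  rw [Set.indicator_of_mem (hN hP)] at hq
  have hpos : 0 < q.1 := hq'.1
  simp [hpos.not_ge] at hq

lemma integral_exp_int_mul_mul_I (k : ℤ) :
    ∫ θ in Set.Ioo (-Real.pi) Real.pi, exp (k * θ * I) =
      if k = 0 then 2 * (Real.pi : ℂ) else 0 := by
  rw [← integral_Ioc_eq_integral_Ioo,
    ← intervalIntegral.integral_of_le (by linarith [Real.pi_pos])]
  split_ifs with hk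
  · simp [hk, two_mul]
  · have hc : (k * I : ℂ) ≠ 0 := mul_ne_zero (Int.cast_ne_zero.2 hk) I_ne_zero
    have hper : exp (k * I * Real.pi) = exp (k * I * (-Real.pi : ℝ)) :=
      exp_eq_exp_iff_exists_int.2 ⟨k, by push_cast; ring⟩
    simp only [mul_right_comm _ _ I]
    rw [integral_exp_mul_complex hc, hper, sub_self, zero_div]

variable {E : Type*} [NormedAddCommGroup E] [NormedSpace ℂ E]

/-- The integrand `angularKernel k w • Dg(w)(w * c)` in polar coordinates `w = r * exp (iθ)`,
including the Jacobian factor `r`. -/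
noncomputable def polarIntegrand (k : ℤ) (c : ℂ) (g : ℂ → E) (q : ℝ × ℝ) : E :=
  exp ((-2 * k : ℤ) * q.2 * I) • fderiv ℝ g (q.1 * exp (q.2 * I)) (exp (q.2 * I) * c)

lemma angularKernel_mul_exp (k : ℤ) {r : ℝ} (hr : r ≠ 0) (θ : ℝ) :
    r * angularKernel k (r * exp (θ * I)) * r = exp ((-2 * k : ℤ) * θ * I) := by
  have hr' : (r : ℂ) ≠ 0 := ofReal_ne_zero.2 hr
  have hnorm : (‖(r * exp (θ * I) : ℂ)‖ : ℂ) ^ 2 = r ^ 2 := by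
    rw [norm_mul, norm_exp_ofReal_mul_I, mul_one, norm_real, ← Complex.ofReal_pow, Real.norm_eq_abs,
      sq_abs, Complex.ofReal_pow]
  have hratio : conj (r * exp (θ * I)) / (r * exp (θ * I)) = exp (-2 * θ * I) := by
    rw [map_mul, conj_ofReal, ← exp_conj, mul_div_mul_left _ _ hr', ← Complex.exp_sub]
    simp only [map_mul, conj_ofReal, conj_I]
    ring_nf
  rw [angularKernel, hnorm, hratio, ← exp_int_mul]
  field_simp
  push_cast
  ring_nf

lemma integral_angularKernel_smul_fderiv_eq (k : ℤ) (c : ℂ) (g : ℂ → E) :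
    ∫ w, angularKernel k w • fderiv ℝ g w (w * c) =
      ∫ q in Set.Ioi 0 ×ˢ Set.Ioo (-Real.pi) Real.pi, polarIntegrand k c g q := by
  rw [← Complex.integral_comp_polarCoord_symm, polarCoord_target]
  refine setIntegral_congr_fun (measurableSet_Ioi.prod measurableSet_Ioo) fun q hq => ?_
  rw [polarCoord_symm_eq_mul_exp, mul_assoc, ← Complex.real_smul (x := q.1) (z := _ * c), map_smul,
    ← Complex.coe_smul q.1, ← Complex.coe_smul q.1, smul_smul, smul_smul,
    angularKernel_mul_exp k (ne_of_gt hq.1), polarIntegrand]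

variable {g : ℂ → E} {ρ : ℝ} {L : ℝ≥0}

lemma norm_polarIntegrand_le (k : ℤ) {c : ℂ} (hc : ‖c‖ = 1) (hg : LipschitzWith L g) (q : ℝ × ℝ) :
    ‖polarIntegrand k c g q‖ ≤ L := by
  have harg : ((-2 * k : ℤ) * q.2 * I : ℂ) = ((-2 * k * q.2 : ℝ) : ℂ) * I := by push_cast; ring
  rw [polarIntegrand, norm_smul, harg, norm_exp_ofReal_mul_I, one_mul]
  simpa [norm_exp_ofReal_mul_I, hc] using
    (fderiv ℝ g (q.1 * exp (q.2 * I))).le_of_opNorm_le (norm_fderiv_le_of_lipschitz ℝ hg)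
      (exp (q.2 * I) * c)

variable [FiniteDimensional ℝ E]

lemma aestronglyMeasurable_polarIntegrand (k : ℤ) (c : ℂ) (g : ℂ → E) :
    AEStronglyMeasurable (polarIntegrand k c g) := by
  have hfderiv : AEStronglyMeasurable fun q : ℝ × ℝ => fderiv ℝ g (q.1 * exp (q.2 * I)) := by
    refine StronglyMeasurable.aestronglyMeasurable ?_
    exact (measurable_fderiv ℝ g).stronglyMeasurable.comp_measurable (by fun_prop)
  have hexp : ∀ d : ℂ, Continuous fun q : ℝ × ℝ => exp (d * q.2 * I) := fun d => by fun_prop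
  have hdir : Continuous fun q : ℝ × ℝ => exp (q.2 * I) * c := by fun_prop
  exact (hexp _).aestronglyMeasurable.smul
    (isBoundedBilinearMap_apply.continuous.comp_aestronglyMeasurable
      (hfderiv.prodMk hdir.aestronglyMeasurable))

lemma integrableOn_polarIntegrand (k : ℤ) {c : ℂ} (hc : ‖c‖ = 1) (hg : LipschitzWith L g)
    (h0 : g.support ⊆ closedBall 0 ρ) :
    IntegrableOn (polarIntegrand k c g) (Set.Ioi 0 ×ˢ Set.Ioo (-Real.pi) Real.pi) := by
  have hbdd : IntegrableOn (polarIntegrand k c g)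
      (Set.Ioc 0 ρ ×ˢ Set.Ioo (-Real.pi) Real.pi) := by
    refine Measure.integrableOn_of_bounded (M := L) ?_ (aestronglyMeasurable_polarIntegrand k c g)
      (.of_forall (norm_polarIntegrand_le k hc hg))
    rw [Measure.volume_eq_prod, Measure.prod_prod]
    exact (ENNReal.mul_lt_top measure_Ioc_lt_top measure_Ioo_lt_top).ne
  refine hbdd.of_forall_sdiff_eq_zero (measurableSet_Ioi.prod measurableSet_Ioo) ?_
  rintro q ⟨hq, hq'⟩
  have hr : ρ < q.1 := not_le.1 fun h => hq' ⟨⟨hq.1, h⟩, hq.2⟩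
  have hzero : fderiv ℝ g (q.1 * exp (q.2 * I)) = 0 := by
    by_contra hne
    have h := mem_closedBall_zero_iff.1 (support_fderiv_subset_closedBall h0 hne)
    rw [norm_mul, norm_exp_ofReal_mul_I, mul_one, norm_real] at h
    exact h.not_gt (hr.trans_le (le_abs_self _))
  rw [polarIntegrand, hzero, zero_apply, smul_zero]

lemma integral_Ioi_fderiv_mul_of_lipschitzWith (hg : LipschitzWith L g)
    (h0 : g.support ⊆ closedBall 0 ρ) {ζ : ℂ} (hζ : ‖ζ‖ = 1)
    (hd : ∀ᵐ r : ℝ ∂volume.restrict (Set.Ioi 0), DifferentiableAt ℝ g (r * ζ)) :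
    ∫ r in Set.Ioi (0 : ℝ), fderiv ℝ g (r * ζ) ζ = -g 0 := by
  have hline : LipschitzWith 1 fun r : ℝ => (r : ℂ) * ζ := .of_dist_le_mul fun x y => by
    rw [dist_eq_norm, ← sub_mul, norm_mul, hζ, ← Complex.ofReal_sub, norm_real, mul_one,
      NNReal.coe_one, one_mul, dist_eq_norm]
  have hvanish : ∀ r : ℝ, ρ < r → g (r * ζ) = 0 := fun r hr => by
    by_contra hne
    have h := mem_closedBall_zero_iff.1 (h0 hne)
    rw [norm_mul, hζ, mul_one, norm_real] at h
    exact h.not_gt (hr.trans_le (le_abs_self _))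
  have hftc := integral_Ioi_deriv_of_lipschitzWith (hg.comp hline) hvanish
  simp only [Function.comp_apply, Complex.ofReal_zero, zero_mul] at hftc
  rw [← hftc]
  refine integral_congr_ae ?_
  filter_upwards [hd] with r hr
  have hderiv : HasDerivAt (fun r : ℝ => (r : ℂ) * ζ) ζ r := by
    simpa using (ofRealCLM.hasDerivAt (x := r)).mul_const ζ
  exact (hr.hasFDerivAt.comp_hasDerivAt r hderiv).deriv.symm

lemma integral_fderiv_circle_of_lipschitzWith (hg : LipschitzWith L g) {r : ℝ} (hr : 0 < r)
    (hd : ∀ᵐ θ : ℝ ∂volume.restrict (Set.Ioo (-Real.pi) Real.pi),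
      DifferentiableAt ℝ g (r * exp (θ * I))) :
    ∫ θ in Set.Ioo (-Real.pi) Real.pi, fderiv ℝ g (r * exp (θ * I)) (exp (θ * I) * I) = 0 := by
  have hderiv : ∀ θ : ℝ, HasDerivAt (circleMap 0 r) (circleMap 0 r θ * I) θ :=
    hasDerivAt_circleMap 0 r
  have hftc := integral_deriv_eq_sub_of_lipschitzWith (hg.comp (lipschitzWith_circleMap 0 r))
    (-Real.pi) Real.pi
  have hper : circleMap 0 r (-Real.pi) = circleMap 0 r Real.pi := by
    rw [← periodic_circleMap 0 r (-Real.pi)]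
    ring_nf
  rw [Function.comp_apply, Function.comp_apply, hper, sub_self,
    intervalIntegral.integral_of_le (by linarith [Real.pi_pos]),
    integral_Ioc_eq_integral_Ioo] at hftc
  refine (smul_eq_zero_iff_right hr.ne').1 (Eq.trans ?_ hftc)
  rw [← integral_smul]
  refine integral_congr_ae ?_
  filter_upwards [hd] with θ hθ
  rw [← circleMap_zero] at hθ
  rw [(hθ.hasFDerivAt.comp_hasDerivAt θ (hderiv θ)).deriv, ← map_smul, Complex.real_smul,
    circleMap_zero, mul_assoc]

lemma integral_angularKernel_smul_fderiv_self (k : ℤ) (hg : LipschitzWith L g)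
    (h0 : g.support ⊆ closedBall 0 ρ) :
    ∫ w, angularKernel k w • fderiv ℝ g w w =
      if k = 0 then -(2 * (Real.pi : ℂ)) • g 0 else 0 := by
  have hint := integrableOn_polarIntegrand k norm_one hg h0
  have hae := ae_restrict_polarCoord_target hg.ae_differentiableAt
  have hpolar := integral_angularKernel_smul_fderiv_eq k 1 g
  simp only [mul_one] at hpolar
  rw [IntegrableOn] at hint
  rw [Measure.volume_eq_prod, ← Measure.prod_restrict] at hpolar hint hae
  have hae' := Measure.ae_ae_of_ae_prod
    (Measure.measurePreserving_swap.quasiMeasurePreserving.ae hae)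
  have hray : ∀ᵐ θ : ℝ ∂volume.restrict (Set.Ioo (-Real.pi) Real.pi),
      ∫ r in Set.Ioi (0 : ℝ), polarIntegrand k 1 g (r, θ) =
        exp ((-2 * k : ℤ) * θ * I) • -g 0 := by
    filter_upwards [hae'] with θ hθ
    simp only [polarIntegrand, mul_one]
    rw [integral_smul, integral_Ioi_fderiv_mul_of_lipschitzWith hg h0 (norm_exp_ofReal_mul_I θ) hθ]
  rw [hpolar, integral_prod_symm _ hint, integral_congr_ae hray, integral_smul_const,
    integral_exp_int_mul_mul_I]
  split_ifs with h h' h' <;> first | omega | simp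

lemma integral_angularKernel_zero_smul_fderiv_mul_I (hg : LipschitzWith L g)
    (h0 : g.support ⊆ closedBall 0 ρ) :
    ∫ w, angularKernel 0 w • fderiv ℝ g w (w * I) = 0 := by
  have hint := integrableOn_polarIntegrand 0 norm_I hg h0
  have hae := ae_restrict_polarCoord_target hg.ae_differentiableAt
  have hpolar := integral_angularKernel_smul_fderiv_eq 0 I g
  rw [IntegrableOn] at hint
  rw [Measure.volume_eq_prod, ← Measure.prod_restrict] at hpolar hint hae
  rw [hpolar, integral_prod _ hint]
  refine integral_eq_zero_of_ae ?_
  filter_upwards [Measure.ae_ae_of_ae_prod hae, ae_restrict_mem measurableSet_Ioi] with r hd hr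
  simpa [polarIntegrand] using integral_fderiv_circle_of_lipschitzWith hg hr hd

end PolarCoordinates

section CauchyPompeiu

lemma fderiv_comp_const_sub {𝕜 E F : Type*} [NontriviallyNormedField 𝕜] [NormedAddCommGroup E]
    [NormedSpace 𝕜 E] [NormedAddCommGroup F] [NormedSpace 𝕜 F] (f : E → F) (a x : E) :
    fderiv 𝕜 (fun y => f (a - y)) x = -fderiv 𝕜 f (a - x) := by
  simp only [sub_eq_add_neg]
  rw [← fderiv_comp_add_left a]
  exact ((ContinuousLinearEquiv.neg 𝕜).comp_right_fderiv (f := fun y => f (a + y))).trans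
    (by ext; simp)

variable {E : Type*} [NormedAddCommGroup E] [NormedSpace ℂ E]

lemma cauchyKernel_smul_wirtingerPart_sub {p : ℤ} (hp : p ≠ -1) (T : ℂ →L[ℝ] E) (w : ℂ) :
    cauchyKernel p w • wirtingerPart (-I) T - cauchyKernel (p + 1) w • wirtingerPart I T =
      ((if 0 ≤ p then 1 else -1) * (-1) ^ p * (Real.pi⁻¹ : ℝ) : ℂ) •
        angularKernel (p + 1) w • T w := by
  have hself : T w = w • wirtingerPart (-I) T + conj w • wirtingerPart I T := by
    rw [smul_wirtingerPart_neg_I, conj_smul_wirtingerPart_I]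
    module
  rw [hself, cauchyKernel_add_one_of_ne_neg_one hp, cauchyKernel_eq_mul_angularKernel p]
  push_cast
  module

lemma cauchyKernel_neg_one_smul_wirtingerPart (T : ℂ →L[ℝ] E) (w : ℂ) :
    cauchyKernel (-1) w • wirtingerPart (-I) T = ((2 * Real.pi)⁻¹ : ℂ) •
      (angularKernel 0 w • T w - I • angularKernel 0 w • T (w * I)) := by
  rw [cauchyKernel_neg_one, mul_comm w, ← mul_assoc, mul_smul, smul_wirtingerPart_neg_I]
  push_cast
  match_scalars <;> ring

lemma cauchyKernel_zero_smul_wirtingerPart (T : ℂ →L[ℝ] E) (w : ℂ) :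
    cauchyKernel 0 w • wirtingerPart I T = ((2 * Real.pi)⁻¹ : ℂ) •
      (angularKernel 0 w • T w + I • angularKernel 0 w • T (w * I)) := by
  rw [cauchyKernel_zero, mul_comm (conj w), ← mul_assoc, mul_smul, conj_smul_wirtingerPart_I]
  push_cast
  match_scalars <;> ring

variable [FiniteDimensional ℝ E] {f : ℂ → E} {ρ : ℝ} {L : ℝ≥0}

lemma integrable_cauchyKernel_smul_wirtingerPart (p : ℤ) (s : ℂ) (hf : LipschitzWith L f)
    (h0 : f.support ⊆ closedBall 0 ρ) (z : ℂ) :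
    Integrable fun w => cauchyKernel p w • wirtingerPart s (fderiv ℝ f (z - w)) := by
  simpa using (wirtingerPart s).integrable_comp (integrable_cauchyTransform_fderiv p hf h0 z)

lemma integral_angularKernel_smul_fderiv_sub (k : ℤ) (hf : LipschitzWith L f)
    (h0 : f.support ⊆ closedBall 0 ρ) (z : ℂ) :
    ∫ w, angularKernel k w • fderiv ℝ f (z - w) w =
      if k = 0 then (2 * (Real.pi : ℂ)) • f z else 0 := by
  have h := integral_angularKernel_smul_fderiv_self k
    (hf.comp (IsometryEquiv.subLeft z).isometry.lipschitz)
    (support_comp_sub_left_subset h0 le_rfl)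
  simp only [Function.comp_def, IsometryEquiv.subLeft_apply, fderiv_comp_const_sub, neg_apply,
    smul_neg, integral_neg, sub_zero, neg_smul] at h
  rw [← neg_inj, h]
  split_ifs <;> simp

lemma integral_angularKernel_zero_smul_fderiv_sub_mul_I (hf : LipschitzWith L f)
    (h0 : f.support ⊆ closedBall 0 ρ) (z : ℂ) :
    ∫ w, angularKernel 0 w • fderiv ℝ f (z - w) (w * I) = 0 := by
  have h := integral_angularKernel_zero_smul_fderiv_mul_I
    (hf.comp (IsometryEquiv.subLeft z).isometry.lipschitz)
    (support_comp_sub_left_subset h0 le_rfl)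
  simpa only [Function.comp_def, IsometryEquiv.subLeft_apply, fderiv_comp_const_sub, neg_apply,
    smul_neg, integral_neg, neg_eq_zero] using h

lemma cauchyTransform_wDv_eq_of_ne_neg_one {p : ℤ} (hp : p ≠ -1) (hf : LipschitzWith L f)
    (h0 : f.support ⊆ closedBall 0 ρ) (z : ℂ) :
    cauchyTransform p (wDv f) z = cauchyTransform (p + 1) (wDbarv f) z := by
  have hk : p + 1 ≠ 0 := fun h => hp (eq_neg_of_add_eq_zero_left h)
  simp only [cauchyTransform, wDv_eq_wirtingerPart, wDbarv_eq_wirtingerPart]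
  rw [← sub_eq_zero, ← integral_sub (integrable_cauchyKernel_smul_wirtingerPart p _ hf h0 z)
    (integrable_cauchyKernel_smul_wirtingerPart (p + 1) _ hf h0 z)]
  simp only [cauchyKernel_smul_wirtingerPart_sub hp]
  rw [integral_smul, integral_angularKernel_smul_fderiv_sub _ hf h0, if_neg hk, smul_zero]

lemma cauchyTransform_neg_one_wDv_add (hf : LipschitzWith L f)
    (h0 : f.support ⊆ closedBall 0 ρ) (z : ℂ) :
    cauchyTransform (-1) (wDv f) z + cauchyTransform 0 (wDbarv f) z = f z + f z := by
  simp only [cauchyTransform, wDv_eq_wirtingerPart, wDbarv_eq_wirtingerPart]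
  rw [← integral_add (integrable_cauchyKernel_smul_wirtingerPart _ _ hf h0 z)
    (integrable_cauchyKernel_smul_wirtingerPart _ _ hf h0 z)]
  simp only [cauchyKernel_neg_one_smul_wirtingerPart, cauchyKernel_zero_smul_wirtingerPart,
    ← smul_add, sub_add_add_cancel]
  have hpi : (Real.pi : ℂ) ≠ 0 := ofReal_ne_zero.2 Real.pi_ne_zero
  simp only [← two_smul ℂ, smul_comm _ (2 : ℂ)]
  rw [integral_smul, integral_smul, integral_angularKernel_smul_fderiv_sub 0 hf h0, if_pos rfl,
    inv_smul_smul₀ (mul_ne_zero two_ne_zero hpi)]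

lemma cauchyTransform_zero_wDbarv_sub (hf : LipschitzWith L f)
    (h0 : f.support ⊆ closedBall 0 ρ) (z : ℂ) :
    cauchyTransform 0 (wDbarv f) z - cauchyTransform (-1) (wDv f) z = 0 := by
  simp only [cauchyTransform, wDv_eq_wirtingerPart, wDbarv_eq_wirtingerPart]
  rw [← integral_sub (integrable_cauchyKernel_smul_wirtingerPart _ _ hf h0 z)
    (integrable_cauchyKernel_smul_wirtingerPart _ _ hf h0 z)]
  simp only [cauchyKernel_neg_one_smul_wirtingerPart, cauchyKernel_zero_smul_wirtingerPart,
    ← smul_sub, add_sub_sub_cancel, ← two_smul ℂ]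
  rw [integral_smul, integral_smul, integral_smul,
    integral_angularKernel_zero_smul_fderiv_sub_mul_I hf h0, smul_zero, smul_zero, smul_zero]

theorem wDv_cauchyTransform_eq_wDbarv (p : ℤ) (hf : LipschitzWith L f)
    (h0 : f.support ⊆ closedBall 0 ρ) :
    wDv (cauchyTransform p f) = wDbarv (cauchyTransform (p + 1) f) := by
  ext1 z
  rw [wDv_cauchyTransform p hf h0, wDbarv_cauchyTransform (p + 1) hf h0]
  rcases eq_or_ne p (-1) with rfl | hp
  · exact (sub_eq_zero.1 (cauchyTransform_zero_wDbarv_sub hf h0 z)).symm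
  · exact cauchyTransform_wDv_eq_of_ne_neg_one hp hf h0 z

theorem wDbarv_cauchyTransform_zero (hf : LipschitzWith L f) (h0 : f.support ⊆ closedBall 0 ρ) :
    wDbarv (cauchyTransform 0 f) = f := by
  ext1 z
  have hadd := cauchyTransform_neg_one_wDv_add hf h0 z
  rw [← sub_eq_zero.1 (cauchyTransform_zero_wDbarv_sub hf h0 z), ← two_smul ℂ, ← two_smul ℂ] at hadd
  rw [wDbarv_cauchyTransform 0 hf h0]
  exact smul_right_injective E two_ne_zero hadd

end CauchyPompeiu

section WirtingerTower

variable {E : Type*} [NormedAddCommGroup E] [NormedSpace ℂ E]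

/-- The primitive of the form `a dz + b dz̄` with value `c` at the origin, obtained by integrating
along segments. -/
noncomputable def wirtingerPrimitive (c : E) (a b : ℂ → E) (z : ℂ) : E :=
  c + ∫ᶜ x in .segment 0 z, wirtingerForm E (a x, b x)

lemma wirtingerPrimitive_zero (c : E) (a b : ℂ → E) : wirtingerPrimitive c a b 0 = c := by
  simp [wirtingerPrimitive]

lemma hasFDerivAt_wirtingerPrimitive [CompleteSpace E] (c : E) {a b : ℂ → E}
    (ha : Differentiable ℝ a) (hb : Differentiable ℝ b) (hab : wDv b = wDbarv a) (z : ℂ) :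
    HasFDerivAt (wirtingerPrimitive c a b) (wirtingerForm E (a z, b z)) z := by
  have hω : ∀ x, HasFDerivAt (fun x => wirtingerForm E (a x, b x))
      ((wirtingerForm E).comp ((fderiv ℝ a x).prod (fderiv ℝ b x))) x := fun x =>
    (wirtingerForm E).hasFDerivAt.comp x ((ha x).hasFDerivAt.prodMk (hb x).hasFDerivAt)
  have hclosed : ∀ x v w : ℂ,
      ((wirtingerForm E).comp ((fderiv ℝ a x).prod (fderiv ℝ b x))) v w =
        ((wirtingerForm E).comp ((fderiv ℝ a x).prod (fderiv ℝ b x))) w v := fun x v w => by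
    simp only [ContinuousLinearMap.comp_apply, ContinuousLinearMap.prod_apply, wirtingerForm_apply,
      ← wirtingerForm_wDv_wDbarv, hab]
    module
  refine HasFDerivAt.const_add c ?_
  simpa only [hasFDerivWithinAt_univ] using
    convex_univ.hasFDerivWithinAt_curveIntegral_segment_of_hasFDerivWithinAt_symmetric
      (fun x _ => (hω x).hasFDerivWithinAt) (fun x _ v _ w _ => hclosed x v w)
      (Set.mem_univ 0) (Set.mem_univ z)

/-- A sequence of `C^k` maps which satisfies the compatibility conditions
`∂ (H i) = ∂̄ (H (i + 1))` met by the sequence of derivatives `∂^i ∂̄^(N - i) u` of a function. -/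
structure IsWirtingerChain (k : ℕ) (H : ℕ → ℂ → E) : Prop where
  contDiff : ∀ i, ContDiff ℝ k (H i)
  wDv_eq : ∀ i, wDv (H i) = wDbarv (H (i + 1))

/-- Iterated primitives of a Wirtinger chain: if `H i` is to be `∂^i ∂̄^(N - i) u`, then
`wirtingerTower H c d i` is `∂^i ∂̄^(N - d - i) u`, with the value `c d i` at the origin when
`0 < d`. -/
noncomputable def wirtingerTower (H : ℕ → ℂ → E) (c : ℕ → ℕ → E) : ℕ → ℕ → ℂ → E
  | 0, i => H i
  | d + 1, i => wirtingerPrimitive (c (d + 1) i) (wirtingerTower H c d (i + 1))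
      (wirtingerTower H c d i)

variable {H : ℕ → ℂ → E} {c : ℕ → ℕ → E}

lemma wirtingerTower_apply_zero (hH : ∀ i, H i 0 = c 0 i) (d i : ℕ) :
    wirtingerTower H c d i 0 = c d i := by
  cases d with
  | zero => exact hH i
  | succ d => exact wirtingerPrimitive_zero _ _ _

variable [CompleteSpace E]

lemma IsWirtingerChain.hasFDerivAt_wirtingerPrimitive {k : ℕ} (hH : IsWirtingerChain k H)
    (hk : k ≠ 0) (e : E) (i : ℕ) (z : ℂ) :
    HasFDerivAt (wirtingerPrimitive e (H (i + 1)) (H i)) (wirtingerForm E (H (i + 1) z, H i z)) z :=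
  _root_.hasFDerivAt_wirtingerPrimitive e ((hH.contDiff (i + 1)).differentiable (mod_cast hk))
    ((hH.contDiff i).differentiable (mod_cast hk)) (hH.wDv_eq i) z

lemma IsWirtingerChain.wirtingerPrimitive {k : ℕ} (hH : IsWirtingerChain k H) (hk : k ≠ 0)
    (e : ℕ → E) : IsWirtingerChain (k + 1) fun i => wirtingerPrimitive (e i) (H (i + 1)) (H i) where
  contDiff i := by
    have hd := hH.hasFDerivAt_wirtingerPrimitive hk (e i) i
    rw [Nat.cast_add, Nat.cast_one, contDiff_succ_iff_fderiv]
    refine ⟨fun z => (hd z).differentiableAt, fun h => absurd h (by simp), ?_⟩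
    rw [funext fun z => (hd z).fderiv]
    exact (wirtingerForm E).contDiff.comp ((hH.contDiff (i + 1)).prodMk (hH.contDiff i))
  wDv_eq i := by
    ext1 z
    rw [wDv_eq_of_hasFDerivAt (hH.hasFDerivAt_wirtingerPrimitive hk (e i) i z),
      wDbarv_eq_of_hasFDerivAt (hH.hasFDerivAt_wirtingerPrimitive hk (e (i + 1)) (i + 1) z)]

lemma IsWirtingerChain.wirtingerTower (hH : IsWirtingerChain 1 H) (c : ℕ → ℕ → E) (d : ℕ) :
    IsWirtingerChain (d + 1) (wirtingerTower H c d) := by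
  induction d with
  | zero => exact hH
  | succ d ih => exact ih.wirtingerPrimitive d.succ_ne_zero _

lemma hasFDerivAt_wirtingerTower_succ (hH : IsWirtingerChain 1 H) (c : ℕ → ℕ → E) (d i : ℕ)
    (z : ℂ) :
    HasFDerivAt (wirtingerTower H c (d + 1) i)
      (wirtingerForm E (wirtingerTower H c d (i + 1) z, wirtingerTower H c d i z)) z :=
  (hH.wirtingerTower c d).hasFDerivAt_wirtingerPrimitive d.succ_ne_zero _ i z

lemma wDv_wirtingerTower_succ (hH : IsWirtingerChain 1 H) (c : ℕ → ℕ → E) (d i : ℕ) :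
    wDv (wirtingerTower H c (d + 1) i) = wirtingerTower H c d (i + 1) :=
  funext fun z => wDv_eq_of_hasFDerivAt (hasFDerivAt_wirtingerTower_succ hH c d i z)

lemma wDbarv_wirtingerTower_succ (hH : IsWirtingerChain 1 H) (c : ℕ → ℕ → E) (d i : ℕ) :
    wDbarv (wirtingerTower H c (d + 1) i) = wirtingerTower H c d i :=
  funext fun z => wDbarv_eq_of_hasFDerivAt (hasFDerivAt_wirtingerTower_succ hH c d i z)

lemma iterate_wDv_wirtingerTower (hH : IsWirtingerChain 1 H) (c : ℕ → ℕ → E) (d i k : ℕ) :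
    wDv^[i] (wirtingerTower H c (d + i) k) = wirtingerTower H c d (k + i) := by
  induction i generalizing k with
  | zero => rfl
  | succ i ih =>
    rw [Function.iterate_succ_apply, ← add_assoc, wDv_wirtingerTower_succ hH, ih]
    congr 1
    omega

lemma iterate_wDbarv_wirtingerTower (hH : IsWirtingerChain 1 H) (c : ℕ → ℕ → E) (d j k : ℕ) :
    wDbarv^[j] (wirtingerTower H c (d + j) k) = wirtingerTower H c d k := by
  induction j with
  | zero => rfl
  | succ j ih => rw [Function.iterate_succ_apply, ← add_assoc, wDbarv_wirtingerTower_succ hH, ih]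

lemma wDijv_wirtingerTower (hH : IsWirtingerChain 1 H) (c : ℕ → ℕ → E) (d i j : ℕ) :
    wDijv i j (wirtingerTower H c (d + i + j) 0) = wirtingerTower H c d i := by
  rw [wDijv, iterate_wDbarv_wirtingerTower hH, iterate_wDv_wirtingerTower hH, zero_add]

lemma wDijv_wirtingerTower_eq_wDbarv (hH : IsWirtingerChain 1 H) (c : ℕ → ℕ → E) {N i j : ℕ}
    (hij : i + j = N + 1) : wDijv i j (wirtingerTower H c N 0) = wDbarv (H i) := by
  cases i with
  | zero =>
    obtain rfl : j = N + 1 := by omega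
    have h := iterate_wDbarv_wirtingerTower hH c 0 N 0
    rw [zero_add] at h
    rw [wDijv, Function.iterate_zero_apply, Function.iterate_succ_apply', h, wirtingerTower]
  | succ i =>
    have h := wDijv_wirtingerTower hH c 0 i j
    rw [show 0 + i + j = N by omega, wDijv] at h
    rw [wDijv, Function.iterate_succ_apply', h, wirtingerTower, hH.wDv_eq]

end WirtingerTower

section TowerEstimates

variable {E : Type*} [NormedAddCommGroup E] [NormedSpace ℂ E]

lemma norm_sub_le_of_hasFDerivAt_wirtingerForm {F : ℂ → E} {q : ℂ → E × E} {B : ℝ} {s : Set ℂ}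
    (hs : Convex ℝ s) (hF : ∀ z ∈ s, HasFDerivAt F (wirtingerForm E (q z)) z)
    (hq : ∀ z ∈ s, ‖q z‖ ≤ B) {z z' : ℂ} (hz : z ∈ s) (hz' : z' ∈ s) :
    ‖F z - F z'‖ ≤ 2 * B * ‖z - z'‖ := by
  refine hs.norm_image_sub_le_of_norm_hasFDerivWithin_le (fun x hx => (hF x hx).hasFDerivWithinAt)
    (fun x hx => (norm_wirtingerForm_le (q x)).trans ?_) hz' hz
  linarith [norm_fst_le (q x), norm_snd_le (q x), hq x hx]

variable [CompleteSpace E] {H H' : ℕ → ℂ → E} {c : ℕ → ℕ → E} {ρ : ℝ}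

lemma norm_wirtingerTower_succ_sub_le (hH : IsWirtingerChain 1 H) {B : ℝ} {d : ℕ}
    (hB : ∀ i, ∀ z ∈ closedBall 0 ρ, ‖wirtingerTower H c d i z‖ ≤ B) (i : ℕ) {z z' : ℂ}
    (hz : z ∈ closedBall 0 ρ) (hz' : z' ∈ closedBall 0 ρ) :
    ‖wirtingerTower H c (d + 1) i z - wirtingerTower H c (d + 1) i z'‖ ≤ 2 * B * ‖z - z'‖ :=
  norm_sub_le_of_hasFDerivAt_wirtingerForm (convex_closedBall 0 ρ)
    (fun x _ => hasFDerivAt_wirtingerTower_succ hH c d i x)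
    (fun x hx => norm_prod_le_iff.2 ⟨hB (i + 1) x hx, hB i x hx⟩) hz hz'

lemma norm_wirtingerTower_sub_le (hH : IsWirtingerChain 1 H) {C r : ℝ} (hc : ∀ d i, ‖c d i‖ ≤ C)
    (hHc : ∀ i, ∀ z ∈ closedBall 0 ρ, ‖H i z - c 0 i‖ ≤ r) (hρ : 2 * (C + r) * ρ ≤ r) (d i : ℕ)
    {z : ℂ} (hz : z ∈ closedBall 0 ρ) : ‖wirtingerTower H c d i z - c d i‖ ≤ r := by
  have h0 : (0 : ℂ) ∈ closedBall 0 ρ := mem_closedBall_self (nonempty_closedBall.1 ⟨z, hz⟩)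
  have hCr : 0 ≤ C + r :=
    add_nonneg ((norm_nonneg _).trans (hc 0 0)) ((norm_nonneg _).trans (hHc 0 0 h0))
  induction d generalizing i z with
  | zero => exact hHc i z hz
  | succ d ih =>
    have hB : ∀ i, ∀ z ∈ closedBall 0 ρ, ‖wirtingerTower H c d i z‖ ≤ C + r := fun i z hz => by
      linarith [norm_le_norm_add_norm_sub' (wirtingerTower H c d i z) (c d i), hc d i, ih i hz]
    have h := norm_wirtingerTower_succ_sub_le hH hB i hz h0
    rw [sub_zero, wirtingerTower, wirtingerPrimitive_zero] at h
    refine h.trans (le_trans ?_ hρ)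
    gcongr
    exact mem_closedBall_zero_iff.1 hz

lemma norm_wirtingerTower_sub_wirtingerTower_le (hH : IsWirtingerChain 1 H)
    (hH' : IsWirtingerChain 1 H') {D : ℝ} (hD : ∀ i, ∀ z ∈ closedBall 0 ρ, ‖H i z - H' i z‖ ≤ D)
    (hρ : ρ ≤ 1 / 2) (d i : ℕ) {z : ℂ} (hz : z ∈ closedBall 0 ρ) :
    ‖wirtingerTower H c d i z - wirtingerTower H' c d i z‖ ≤ D := by
  have h0 : (0 : ℂ) ∈ closedBall 0 ρ := mem_closedBall_self (nonempty_closedBall.1 ⟨z, hz⟩)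
  induction d generalizing i z with
  | zero => exact hD i z hz
  | succ d ih =>
    have hderiv : ∀ x, HasFDerivAt
        (fun x => wirtingerTower H c (d + 1) i x - wirtingerTower H' c (d + 1) i x)
        (wirtingerForm E (wirtingerTower H c d (i + 1) x - wirtingerTower H' c d (i + 1) x,
          wirtingerTower H c d i x - wirtingerTower H' c d i x)) x := fun x => by
      rw [← Prod.mk_sub_mk, map_sub]
      exact (hasFDerivAt_wirtingerTower_succ hH c d i x).sub
        (hasFDerivAt_wirtingerTower_succ hH' c d i x)
    have h := norm_sub_le_of_hasFDerivAt_wirtingerForm (convex_closedBall 0 ρ)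
      (fun x _ => hderiv x) (fun x hx => norm_prod_le_iff.2 ⟨ih (i + 1) hx, ih i hx⟩) hz h0
    simp only [wirtingerTower, wirtingerPrimitive_zero, sub_self, sub_zero] at h
    have hD0 : 0 ≤ D := (norm_nonneg _).trans (hD 0 0 h0)
    calc _ ≤ 2 * D * ‖z‖ := h
      _ ≤ 2 * D * (1 / 2) := by gcongr; exact (mem_closedBall_zero_iff.1 hz).trans hρ
      _ = D := by ring

end TowerEstimates

section CauchyChain

variable {E : Type*} [NormedAddCommGroup E] [NormedSpace ℂ E]

/-- The functions `∂^i ∂̄^(m - 1 - i) u`, with prescribed values `e i` at the origin, for a solution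
`u` of `∂^μ ∂̄^ν u = f`, where `m = μ + ν`. -/
noncomputable def cauchyChain (μ : ℕ) (e : ℕ → E) (f : ℂ → E) (i : ℕ) (z : ℂ) : E :=
  e i + (cauchyTransform (i - μ) f z - cauchyTransform (i - μ) f 0)

variable {μ : ℕ} {e : ℕ → E} {f g : ℂ → E} {ρ : ℝ}

lemma cauchyChain_apply_zero (μ : ℕ) (e : ℕ → E) (f : ℂ → E) (i : ℕ) :
    cauchyChain μ e f i 0 = e i := by
  rw [cauchyChain, sub_self, add_zero]

lemma fderiv_cauchyChain (μ : ℕ) (e : ℕ → E) (f : ℂ → E) (i : ℕ) :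
    fderiv ℝ (cauchyChain μ e f i) = fderiv ℝ (cauchyTransform (i - μ) f) := by
  ext1 z
  exact (fderiv_const_add (e i)).trans (fderiv_sub_const _)

lemma wDv_cauchyChain (μ : ℕ) (e : ℕ → E) (f : ℂ → E) (i : ℕ) :
    wDv (cauchyChain μ e f i) = wDv (cauchyTransform (i - μ) f) := by
  ext1 z
  rw [wDv, wDv, fderiv_cauchyChain]

lemma wDbarv_cauchyChain (μ : ℕ) (e : ℕ → E) (f : ℂ → E) (i : ℕ) :
    wDbarv (cauchyChain μ e f i) = wDbarv (cauchyTransform (i - μ) f) := by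
  ext1 z
  rw [wDbarv, wDbarv, fderiv_cauchyChain]

lemma norm_cauchyChain_sub_le {A : ℝ} (hA : ∀ z, ‖f z‖ ≤ A) (h0 : f.support ⊆ closedBall 0 ρ)
    (i : ℕ) {z : ℂ} (hz : z ∈ closedBall 0 ρ) : ‖cauchyChain μ e f i z - e i‖ ≤ 8 * ρ * A := by
  have h0ρ : (0 : ℂ) ∈ closedBall 0 ρ := mem_closedBall_self (nonempty_closedBall.1 ⟨z, hz⟩)
  rw [cauchyChain, add_sub_cancel_left]
  refine (norm_sub_le _ _).trans ?_
  linarith [norm_cauchyTransform_le (i - μ) hA h0 hz, norm_cauchyTransform_le (i - μ) hA h0 h0ρ]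

lemma norm_cauchyChain_sub_le_of_lipschitzWith {L : ℝ≥0} (hf : LipschitzWith L f)
    (h0 : f.support ⊆ closedBall 0 ρ) (i : ℕ) {z z' : ℂ} (hz : z ∈ closedBall 0 ρ)
    (hz' : z' ∈ closedBall 0 ρ) :
    ‖cauchyChain μ e f i z - cauchyChain μ e f i z'‖ ≤ 4 * ρ * L * ‖z - z'‖ := by
  rw [cauchyChain, cauchyChain, add_sub_add_left_eq_sub, sub_sub_sub_cancel_right]
  exact norm_cauchyTransform_sub_le_of_lipschitzWith _ hf h0 hz hz'

lemma norm_cauchyChain_sub_cauchyChain_le {δ : ℝ} (hf : Continuous f)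
    (h0 : f.support ⊆ closedBall 0 ρ) (hg : Continuous g) (h0' : g.support ⊆ closedBall 0 ρ)
    (hδ : ∀ z, ‖f z - g z‖ ≤ δ) (i : ℕ) {z : ℂ} (hz : z ∈ closedBall 0 ρ) :
    ‖cauchyChain μ e f i z - cauchyChain μ e g i z‖ ≤ 8 * ρ * δ := by
  obtain ⟨B, hB⟩ := exists_norm_le_of_support_subset_closedBall hf h0
  obtain ⟨B', hB'⟩ := exists_norm_le_of_support_subset_closedBall hg h0'
  have hsub :
      cauchyChain μ e f i z - cauchyChain μ e g i z = cauchyChain μ e (f - g) i z - e i := by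
    have hint : ∀ x, cauchyTransform (i - μ) (f - g) x =
        cauchyTransform (i - μ) f x - cauchyTransform (i - μ) g x := fun x =>
      cauchyTransform_sub _ (integrable_cauchyTransform _ hf.aestronglyMeasurable hB h0 x)
        (integrable_cauchyTransform _ hg.aestronglyMeasurable hB' h0' x)
    simp only [cauchyChain, hint]
    abel
  rw [hsub]
  exact norm_cauchyChain_sub_le hδ
    ((Function.support_sub f g).trans (Set.union_subset h0 h0')) i hz

lemma isWirtingerChain_cauchyChain [FiniteDimensional ℝ E] {L : ℝ≥0} (hf : LipschitzWith L f)
    (h0 : f.support ⊆ closedBall 0 ρ) : IsWirtingerChain 1 (cauchyChain μ e f) where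
  contDiff i := contDiff_const.add ((contDiff_one_cauchyTransform (i - μ) hf h0).sub contDiff_const)
  wDv_eq i := by
    rw [wDv_cauchyChain, wDbarv_cauchyChain, wDv_cauchyTransform_eq_wDbarv _ hf h0, Nat.cast_succ,
      add_sub_right_comm]

end CauchyChain

section CauchyPotential

variable {E : Type*} [NormedAddCommGroup E] {m : ℕ}

/-- The values `c` prescribed at the origin, indexed as in `wirtingerTower`: the entry `(d, i)` of
the tower is the derivative of order `(i, m - 1 - d - i)`. Entries outside of the triangle are
irrelevant and set to `0`. -/
def towerValues (c : Idx m → E) (d i : ℕ) : E :=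
  if h : i + d < m then c ⟨(⟨i, by omega⟩, ⟨m - 1 - d - i, by omega⟩), by dsimp only; omega⟩ else 0

lemma norm_towerValues_le (c : Idx m → E) (d i : ℕ) : ‖towerValues c d i‖ ≤ ‖c‖ := by
  rw [towerValues]
  split_ifs
  · exact norm_le_pi_norm c _
  · simp

lemma towerValues_idx (c : Idx m → E) (p : Idx m) :
    towerValues c (m - 1 - p.1.1 - p.1.2) p.1.1 = c p := by
  obtain ⟨⟨⟨i, hi⟩, ⟨j, hj⟩⟩, hp⟩ := p
  dsimp only at hp ⊢
  rw [towerValues, dif_pos (by omega)]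
  congr 4
  omega

variable [NormedSpace ℂ E]

/-- The derivatives of order less than `m` of `u` at `z`. -/
noncomputable def wirtingerJet (m : ℕ) (u : ℂ → E) (z : ℂ) : Idx m → E :=
  fun p => wDijv p.1.1 p.1.2 u z

/-- The solution of `∂^μ ∂̄^(m - μ) u = f` whose jet at the origin is `c`, for Lipschitz `f` with
compact support. -/
noncomputable def cauchyPotential (μ : ℕ) (c : Idx m → E) (f : ℂ → E) : ℂ → E :=
  wirtingerTower (cauchyChain μ (towerValues c 0) f) (towerValues c) (m - 1) 0

variable [FiniteDimensional ℝ E] {μ : ℕ} {c : Idx m → E} {f g : ℂ → E} {L L' : ℝ≥0} {ρ : ℝ}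

lemma wirtingerJet_cauchyPotential_apply (hf : LipschitzWith L f) (h0 : f.support ⊆ closedBall 0 ρ)
    (z : ℂ) (p : Idx m) : wirtingerJet m (cauchyPotential μ c f) z p =
      wirtingerTower (cauchyChain μ (towerValues c 0) f) (towerValues c) (m - 1 - p.1.1 - p.1.2)
        p.1.1 z := by
  have : CompleteSpace E := FiniteDimensional.complete ℝ E
  have hm : m - 1 = m - 1 - p.1.1 - p.1.2 + p.1.1 + p.1.2 := by have := p.2; omega
  rw [wirtingerJet, cauchyPotential]
  conv_lhs => rw [hm, wDijv_wirtingerTower (isWirtingerChain_cauchyChain hf h0)]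

lemma contDiff_cauchyPotential (hm : 1 ≤ m) (hf : LipschitzWith L f)
    (h0 : f.support ⊆ closedBall 0 ρ) : ContDiff ℝ m (cauchyPotential μ c f) := by
  have : CompleteSpace E := FiniteDimensional.complete ℝ E
  obtain ⟨N, rfl⟩ := Nat.exists_eq_add_of_le' hm
  exact ((isWirtingerChain_cauchyChain hf h0).wirtingerTower (towerValues c) N).contDiff 0

lemma wirtingerJet_cauchyPotential_zero (hf : LipschitzWith L f) (h0 : f.support ⊆ closedBall 0 ρ) :
    wirtingerJet m (cauchyPotential μ c f) 0 = c := by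
  ext1 p
  rw [wirtingerJet_cauchyPotential_apply hf h0,
    wirtingerTower_apply_zero (cauchyChain_apply_zero _ _ _), towerValues_idx]

lemma wDijv_cauchyPotential (hm : 1 ≤ m) (hf : LipschitzWith L f) (h0 : f.support ⊆ closedBall 0 ρ)
    {i j : ℕ} (hij : i + j = m) :
    wDijv i j (cauchyPotential μ c f) = wDbarv (cauchyTransform (i - μ) f) := by
  have : CompleteSpace E := FiniteDimensional.complete ℝ E
  rw [cauchyPotential, wDijv_wirtingerTower_eq_wDbarv (isWirtingerChain_cauchyChain hf h0) _
    (hij.trans (Nat.sub_add_cancel hm).symm), wDbarv_cauchyChain]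

lemma wDijv_cauchyPotential_self {ν : ℕ} (hm : 1 ≤ m) (hμν : μ + ν = m) (hf : LipschitzWith L f)
    (h0 : f.support ⊆ closedBall 0 ρ) : wDijv μ ν (cauchyPotential μ c f) = f := by
  rw [wDijv_cauchyPotential hm hf h0 hμν, sub_self, wDbarv_cauchyTransform_zero hf h0]

lemma norm_wirtingerJet_cauchyPotential_sub_le {A r : ℝ} (hA : ∀ z, ‖f z‖ ≤ A)
    (hf : LipschitzWith L f) (h0 : f.support ⊆ closedBall 0 ρ) (hρA : 8 * ρ * A ≤ r)
    (hρc : 2 * (‖c‖ + r) * ρ ≤ r) {z : ℂ} (hz : z ∈ closedBall 0 ρ) :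
    ‖wirtingerJet m (cauchyPotential μ c f) z - c‖ ≤ r := by
  have : CompleteSpace E := FiniteDimensional.complete ℝ E
  have hchain : ∀ i, ∀ x ∈ closedBall 0 ρ,
      ‖cauchyChain μ (towerValues c 0) f i x - towerValues c 0 i‖ ≤ r := fun i x hx =>
    (norm_cauchyChain_sub_le hA h0 i hx).trans hρA
  refine (pi_norm_le_iff_of_nonneg ((norm_nonneg _).trans (hchain 0 z hz))).2 fun p => ?_
  rw [Pi.sub_apply, wirtingerJet_cauchyPotential_apply hf h0, ← towerValues_idx c p]
  exact norm_wirtingerTower_sub_le (isWirtingerChain_cauchyChain hf h0) (norm_towerValues_le c)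
    hchain hρc _ _ hz

lemma norm_wirtingerJet_cauchyPotential_sub_le_mul {A r : ℝ} (hA : ∀ z, ‖f z‖ ≤ A)
    (hf : LipschitzWith L f) (h0 : f.support ⊆ closedBall 0 ρ) (hρA : 8 * ρ * A ≤ r)
    (hρc : 2 * (‖c‖ + r) * ρ ≤ r) {z z' : ℂ} (hz : z ∈ closedBall 0 ρ) (hz' : z' ∈ closedBall 0 ρ) :
    ‖wirtingerJet m (cauchyPotential μ c f) z - wirtingerJet m (cauchyPotential μ c f) z'‖ ≤
      max (4 * ρ * L) (2 * (‖c‖ + r)) * ‖z - z'‖ := by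
  have : CompleteSpace E := FiniteDimensional.complete ℝ E
  have hρ : 0 ≤ ρ := nonempty_closedBall.1 ⟨z, hz⟩
  have hH := isWirtingerChain_cauchyChain (μ := μ) (e := towerValues c 0) hf h0
  have hchain : ∀ i, ∀ x ∈ closedBall 0 ρ,
      ‖cauchyChain μ (towerValues c 0) f i x - towerValues c 0 i‖ ≤ r := fun i x hx =>
    (norm_cauchyChain_sub_le hA h0 i hx).trans hρA
  have hbound : ∀ d i, ∀ x ∈ closedBall 0 ρ,
      ‖wirtingerTower (cauchyChain μ (towerValues c 0) f) (towerValues c) d i x‖ ≤ ‖c‖ + r :=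
    fun d i x hx => (norm_le_norm_add_norm_sub' _ (towerValues c d i)).trans <|
      add_le_add (norm_towerValues_le c d i)
        (norm_wirtingerTower_sub_le hH (norm_towerValues_le c) hchain hρc d i hx)
  refine (pi_norm_le_iff_of_nonneg (by positivity)).2 fun p => ?_
  rw [Pi.sub_apply, wirtingerJet_cauchyPotential_apply hf h0,
    wirtingerJet_cauchyPotential_apply hf h0]
  rcases m - 1 - p.1.1 - p.1.2 with _ | d
  · refine (norm_cauchyChain_sub_le_of_lipschitzWith hf h0 _ hz hz').trans ?_
    gcongr
    exact le_max_left _ _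
  · refine (norm_wirtingerTower_succ_sub_le hH (hbound d) _ hz hz').trans ?_
    gcongr
    exact le_max_right _ _

lemma norm_wirtingerJet_cauchyPotential_sub_wirtingerJet_le {δ : ℝ} (hf : LipschitzWith L f)
    (h0 : f.support ⊆ closedBall 0 ρ) (hg : LipschitzWith L' g) (h0' : g.support ⊆ closedBall 0 ρ)
    (hρ : ρ ≤ 1 / 2) (hδ : ∀ z, ‖f z - g z‖ ≤ δ) {z : ℂ} (hz : z ∈ closedBall 0 ρ) :
    ‖wirtingerJet m (cauchyPotential μ c f) z - wirtingerJet m (cauchyPotential μ c g) z‖ ≤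
      8 * ρ * δ := by
  have : CompleteSpace E := FiniteDimensional.complete ℝ E
  have hρ0 : 0 ≤ ρ := nonempty_closedBall.1 ⟨z, hz⟩
  have hδ0 : 0 ≤ δ := (norm_nonneg _).trans (hδ 0)
  refine (pi_norm_le_iff_of_nonneg (by positivity)).2 fun p => ?_
  rw [Pi.sub_apply, wirtingerJet_cauchyPotential_apply hf h0,
    wirtingerJet_cauchyPotential_apply hg h0']
  exact norm_wirtingerTower_sub_wirtingerTower_le (isWirtingerChain_cauchyChain hf h0)
    (isWirtingerChain_cauchyChain hg h0')
    (fun i x hx => norm_cauchyChain_sub_cauchyChain_le hf.continuous h0 hg.continuous h0' hδ i hx)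
    hρ _ _ hz

end CauchyPotential

section FixedPoint

lemma exists_isFixedPt_of_forall_dist_le {X Y : Type*} [MetricSpace Y] [CompleteSpace Y]
    {S : Set (X → Y)} (hS : IsClosed S) (hne : S.Nonempty) {C : ℝ}
    (hC : ∀ f ∈ S, ∀ g ∈ S, ∀ x, dist (f x) (g x) ≤ C) {G : (X → Y) → X → Y} (hG : Set.MapsTo G S S)
    {q : ℝ≥0} (hq : q < 1)
    (hGq : ∀ f ∈ S, ∀ g ∈ S, ∀ δ, (∀ x, dist (f x) (g x) ≤ δ) → ∀ x, dist (G f x) (G g x) ≤ q * δ) :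
    ∃ f ∈ S, Function.IsFixedPt G f := by
  let S' : Set (UniformFun X Y) := UniformFun.toFun ⁻¹' S
  have hS' : IsComplete S' :=
    (hS.preimage UniformFun.uniformContinuous_toFun.continuous).isComplete
  have hfin : ∀ f ∈ S', ∀ g ∈ S', edist f g ≠ ⊤ := fun f hf g hg => by
    refine ne_top_of_le_ne_top (ofReal_ne_top (r := C)) (UniformFun.edist_le.2 fun x => ?_)
    rw [edist_dist]
    exact ofReal_le_ofReal (hC _ hf _ hg x)
  let G' : UniformFun X Y → UniformFun X Y := fun f => UniformFun.ofFun (G (UniformFun.toFun f))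
  have hG' : Set.MapsTo G' S' S' := fun _ hf => hG hf
  have hcontr : ContractingWith q (hG'.restrict G' S' S') := by
    refine ⟨hq, fun f g => UniformFun.edist_le.2 fun x => ?_⟩
    have hdist : ∀ y, dist (UniformFun.toFun f.1 y) (UniformFun.toFun g.1 y) ≤
        (edist f.1 g.1).toReal := fun y => by
      rw [dist_edist]
      exact toReal_mono (hfin _ f.2 _ g.2) UniformFun.edist_eval_le
    calc edist (G (UniformFun.toFun f.1) x) (G (UniformFun.toFun g.1) x)
        ≤ ENNReal.ofReal (q * (edist f.1 g.1).toReal) := by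
          rw [edist_dist]
          exact ofReal_le_ofReal (hGq _ f.2 _ g.2 _ hdist x)
      _ = q * edist f.1 g.1 := by
          rw [ENNReal.ofReal_mul q.coe_nonneg, ofReal_toReal (hfin _ f.2 _ g.2), ofReal_coe_nnreal]
  obtain ⟨f, hf⟩ := hne
  obtain ⟨g, hg, hfix, -⟩ := hcontr.exists_fixedPoint' hS' hG'
    (show UniformFun.ofFun f ∈ S' from hf) (hfin _ hf _ (hG hf))
  exact ⟨UniformFun.toFun g, hg, hfix⟩

lemma exists_lipschitzWith_cutoff {X : Type*} [PseudoMetricSpace X] (x : X) {r s : ℝ} (h : r < s) :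
    ∃ (K : ℝ≥0) (χ : X → ℝ), LipschitzWith K χ ∧ (∀ y, ‖χ y‖ ≤ 1) ∧
      (∀ y ∈ closedBall x r, χ y = 1) ∧ χ.support ⊆ closedBall x s := by
  have hδ : 0 < s - r := sub_pos.2 h
  refine ⟨_, fun y => thickenedIndicator hδ (closedBall x r) y,
    isometry_subtype_coe.lipschitz.comp (lipschitzWith_thickenedIndicator hδ _), fun y => ?_,
    fun y hy => ?_, fun y hy => ?_⟩
  · rw [NNReal.norm_eq]
    exact_mod_cast thickenedIndicator_le_one hδ _ y
  · dsimp only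
    exact_mod_cast thickenedIndicator_one hδ _ hy
  · have hy' : y ∈ thickening (s - r) (closedBall x r) :=
      not_imp_comm.1 (thickenedIndicator_zero hδ _) (by simpa using hy)
    obtain ⟨z, hz, hyz⟩ := mem_thickening_iff.1 hy'
    rw [mem_closedBall] at hz ⊢
    linarith [dist_triangle y z x]

variable {X : Type*} [PseudoMetricSpace X] {E : Type*} [NormedAddCommGroup E]
  {A K L M : ℝ≥0} {s : Set X}

/-- The set of functions on which the fixed point argument takes place: functions bounded by `A`,
Lipschitz with constant `L` and supported in `s`. -/
structure IsAdmissible (A L : ℝ≥0) (s : Set X) (f : X → E) : Prop where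
  norm_le : ∀ x, ‖f x‖ ≤ A
  lipschitzWith : LipschitzWith L f
  support_subset : f.support ⊆ s

lemma isAdmissible_zero : IsAdmissible A L s (0 : X → E) where
  norm_le _ := by simp
  lipschitzWith := LipschitzWith.const' 0
  support_subset := by simp

lemma isClosed_setOf_isAdmissible : IsClosed {f : X → E | IsAdmissible A L s f} := by
  have heq : {f : X → E | IsAdmissible A L s f} =
      (⋂ x, {f | ‖f x‖ ≤ A}) ∩ {f | LipschitzWith L f} ∩ ⋂ x ∈ sᶜ, {f | f x = 0} := by
    ext f
    simp only [Set.mem_inter_iff, Set.mem_iInter, Set.mem_ofPred_eq]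
    exact ⟨fun h => ⟨⟨h.1, h.2⟩, fun x hx => Function.support_subset_iff'.1 h.3 x hx⟩,
      fun h => ⟨h.1.1, h.1.2, Function.support_subset_iff'.2 h.2⟩⟩
  rw [heq]
  refine ((isClosed_iInter fun x => ?_).inter (isClosed_setOfPred_lipschitzWith L)).inter
    (isClosed_biInter fun x _ => ?_)
  · exact isClosed_le (continuous_apply x).norm continuous_const
  · exact isClosed_eq (continuous_apply x) continuous_const

variable [NormedSpace ℝ E] {χ : X → ℝ}

lemma lipschitzWith_smul_of_support_subset {b : X → E} (hb : LipschitzOnWith K b s)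
    (hbA : ∀ x ∈ s, ‖b x‖ ≤ A) (hχ : LipschitzWith M χ) (hχ1 : ∀ x, ‖χ x‖ ≤ 1)
    (hχs : χ.support ⊆ s) : LipschitzWith (M * A + K) fun x => χ x • b x := by
  have hzero : ∀ x ∉ s, χ x = 0 := Function.support_subset_iff'.1 hχs
  have hχA : ∀ x ∈ s, ∀ y, ‖(χ x - χ y) • b x‖ ≤ M * A * dist x y := fun x hx y => by
    rw [norm_smul, mul_right_comm, ← dist_eq_norm]
    exact mul_le_mul (hχ.dist_le_mul x y) (hbA x hx) (norm_nonneg _) (by positivity)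
  have hK : ∀ x y : X, 0 ≤ K * dist x y := fun x y => by positivity
  have hmem : ∀ x ∈ s, ∀ y, dist (χ x • b x) (χ y • b y) ≤ (M * A + K) * dist x y := by
    intro x hx y
    rw [add_mul, dist_eq_norm]
    by_cases hy : y ∈ s
    · have hKχ : ‖χ y • (b x - b y)‖ ≤ K * dist x y := by
        rw [norm_smul, ← dist_eq_norm]
        exact (mul_le_of_le_one_left dist_nonneg (hχ1 y)).trans (hb.dist_le_mul x hx y hy)
      rw [show χ x • b x - χ y • b y = (χ x - χ y) • b x + χ y • (b x - b y) by module]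
      exact norm_add_le_of_le (hχA x hx y) hKχ
    · have h := hχA x hx y
      simp only [hzero y hy, sub_zero, zero_smul] at h ⊢
      linarith [hK x y]
  refine LipschitzWith.of_dist_le_mul fun x y => ?_
  push_cast
  by_cases hx : x ∈ s
  · exact hmem x hx y
  by_cases hy : y ∈ s
  · rw [dist_comm, dist_comm x]
    exact hmem y hy x
  · simp only [hzero x hx, hzero y hy, zero_smul, dist_self]
    positivity

lemma isAdmissible_smul {b : X → E} (hb : LipschitzOnWith K b s) (hbA : ∀ x ∈ s, ‖b x‖ ≤ A)
    (hχ : LipschitzWith M χ) (hχ1 : ∀ x, ‖χ x‖ ≤ 1) (hχs : χ.support ⊆ s)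
    (hL : M * A + K ≤ L) : IsAdmissible A L s fun x => χ x • b x where
  norm_le x := by
    by_cases hx : x ∈ s
    · rw [norm_smul]
      exact (mul_le_of_le_one_left (norm_nonneg _) (hχ1 x)).trans (hbA x hx)
    · simp [Function.support_subset_iff'.1 hχs x hx]
  lipschitzWith := (lipschitzWith_smul_of_support_subset hb hbA hχ hχ1 hχs).weaken hL
  support_subset := (Function.support_smul_subset_left _ _).trans hχs

lemma exists_isAdmissible_eq_smul [CompleteSpace E] {Y : Type*} [PseudoMetricSpace Y]
    {a : Y → E} {t : Set Y} (ha : LipschitzOnWith K a t) (haA : ∀ y ∈ t, ‖a y‖ ≤ A)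
    {Φ : (X → E) → X → Y} {N κ : ℝ≥0}
    (hΦt : ∀ f, IsAdmissible A L s f → Set.MapsTo (Φ f) s t)
    (hΦN : ∀ f, IsAdmissible A L s f → LipschitzOnWith N (Φ f) s)
    (hΦκ : ∀ f, IsAdmissible A L s f → ∀ g, IsAdmissible A L s g → ∀ δ,
      (∀ x, dist (f x) (g x) ≤ δ) → ∀ x ∈ s, dist (Φ f x) (Φ g x) ≤ κ * δ)
    (hχ : LipschitzWith M χ) (hχ1 : ∀ x, ‖χ x‖ ≤ 1) (hχs : χ.support ⊆ s)
    (hL : M * A + K * N ≤ L) (hKκ : K * κ < 1) :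
    ∃ f, IsAdmissible A L s f ∧ ∀ x, f x = χ x • a (Φ f x) := by
  have hmaps : ∀ f, IsAdmissible A L s f → IsAdmissible A L s fun x => χ x • a (Φ f x) :=
    fun f hf => isAdmissible_smul (ha.comp (hΦN f hf) (hΦt f hf))
      (fun x hx => haA _ (hΦt f hf hx)) hχ hχ1 hχs hL
  have hbdd : ∀ f : X → E, IsAdmissible A L s f → ∀ g, IsAdmissible A L s g →
      ∀ x, dist (f x) (g x) ≤ A + A := fun f hf g hg x => by
    linarith [dist_le_norm_add_norm (f x) (g x), hf.norm_le x, hg.norm_le x]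
  have hcontr : ∀ f, IsAdmissible A L s f → ∀ g, IsAdmissible A L s g → ∀ δ,
      (∀ x, dist (f x) (g x) ≤ δ) →
      ∀ x, dist (χ x • a (Φ f x)) (χ x • a (Φ g x)) ≤ (K * κ : ℝ≥0) * δ := by
    intro f hf g hg δ hδ x
    by_cases hx : x ∈ s
    · calc dist (χ x • a (Φ f x)) (χ x • a (Φ g x)) = ‖χ x‖ * dist (a (Φ f x)) (a (Φ g x)) :=
            dist_smul₀ _ _ _
        _ ≤ dist (a (Φ f x)) (a (Φ g x)) := mul_le_of_le_one_left dist_nonneg (hχ1 x)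
        _ ≤ K * dist (Φ f x) (Φ g x) := ha.dist_le_mul _ (hΦt f hf hx) _ (hΦt g hg hx)
        _ ≤ K * (κ * δ) := by gcongr; exact hΦκ f hf g hg δ hδ x hx
        _ = (K * κ : ℝ≥0) * δ := by push_cast; ring
    · have hδ0 : 0 ≤ δ := dist_nonneg.trans (hδ x)
      simp only [Function.support_subset_iff'.1 hχs x hx, zero_smul, dist_self]
      positivity
  obtain ⟨f, hf, hfix⟩ := exists_isFixedPt_of_forall_dist_le isClosed_setOf_isAdmissible
    ⟨0, isAdmissible_zero⟩ hbdd hmaps hKκ hcontr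
  exact ⟨f, hf, fun x => (congrFun hfix x).symm⟩

end FixedPoint

section LocalExistence

variable {E : Type*} [NormedAddCommGroup E] [NormedSpace ℂ E] {m μ : ℕ} {c : Idx m → E}

lemma exists_pos_radius {r : ℝ} (hr : 0 < r) (A B K : ℝ) :
    ∃ ρ : ℝ≥0,
      0 < ρ ∧ (ρ : ℝ) ≤ 1 / 2 ∧ ρ ≤ r ∧ 8 * ρ * A ≤ r ∧ 2 * B * ρ ≤ r ∧ 16 * K * ρ ≤ 1 := by
  have hsmall : ∀ C b : ℝ, 0 < b → ∀ᶠ ρ in 𝓝[>] (0 : ℝ), C * ρ ≤ b := fun C b hb => by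
    have htendsto : Filter.Tendsto (C * ·) (𝓝[>] (0 : ℝ)) (𝓝 (C * 0)) :=
      (continuous_const_mul C).continuousAt.mono_left nhdsWithin_le_nhds
    rw [mul_zero] at htendsto
    exact htendsto.eventually_le_const hb
  obtain ⟨ρ, hρ, h₁, h₂, h₃, h₄, h₅⟩ := (eventually_mem_nhdsWithin.and <|
    (hsmall 1 (1 / 2) one_half_pos).and <| (hsmall 1 r hr).and <| (hsmall (8 * A) r hr).and <|
    (hsmall (2 * B) r hr).and <| hsmall (16 * K) 1 one_pos).exists
  lift ρ to ℝ≥0 using (Set.mem_Ioi.1 hρ).le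
  exact ⟨ρ, mod_cast hρ, by linarith, by linarith, by linarith, h₄, h₅⟩

lemma exists_add_mul_max_le {K ρ : ℝ≥0} (hρK : 16 * K * ρ ≤ (1 : ℝ)) (B C : ℝ≥0) :
    ∃ L, C + K * max 1 (max (4 * ρ * L) B) ≤ L := by
  let L := 2 * (C + K * (1 + B))
  have hmax : max 1 (max (4 * ρ * L) B) ≤ 1 + B + 4 * ρ * L :=
    max_le (le_add_right le_self_add) (max_le le_add_self (le_add_right le_add_self))
  have hL : K * (4 * ρ * L) ≤ C + K * (1 + B) := by
    have hpos : (0 : ℝ) ≤ C + K * (1 + B) := by positivity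
    rw [← NNReal.coe_le_coe]
    push_cast [L]
    linarith [mul_le_mul_of_nonneg_right hρK hpos]
  refine ⟨L, ?_⟩
  calc C + K * max 1 (max (4 * ρ * L) B) ≤ C + K * (1 + B + 4 * ρ * L) := by gcongr
    _ = C + K * (1 + B) + K * (4 * ρ * L) := by ring
    _ ≤ C + K * (1 + B) + (C + K * (1 + B)) := by gcongr
    _ = L := (two_mul _).symm

variable [FiniteDimensional ℝ E] {A K L r ρ : ℝ≥0} {f g : ℂ → E}

lemma mapsTo_prodMk_wirtingerJet_cauchyPotential (hf : IsAdmissible A L (closedBall 0 (ρ : ℝ)) f)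
    (hρr : (ρ : ℝ) ≤ r) (hρA : 8 * ρ * A ≤ (r : ℝ)) (hρc : 2 * (‖c‖ + r) * ρ ≤ r) :
    Set.MapsTo (fun z => (z, wirtingerJet m (cauchyPotential μ c f) z))
      (closedBall 0 (ρ : ℝ)) (closedBall (0, c) r) := fun z hz => by
  rw [← closedBall_prod_same]
  exact ⟨closedBall_subset_closedBall hρr hz, mem_closedBall_iff_norm.2 <|
    norm_wirtingerJet_cauchyPotential_sub_le hf.norm_le hf.lipschitzWith hf.support_subset
      hρA hρc hz⟩

lemma lipschitzOnWith_prodMk_wirtingerJet_cauchyPotential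
    (hf : IsAdmissible A L (closedBall 0 (ρ : ℝ)) f)
    (hρA : 8 * ρ * A ≤ (r : ℝ)) (hρc : 2 * (‖c‖ + r) * ρ ≤ r) :
    LipschitzOnWith (max 1 (max (4 * ρ * L) (2 * (‖c‖₊ + r))))
      (fun z => (z, wirtingerJet m (cauchyPotential μ c f) z)) (closedBall 0 (ρ : ℝ)) := by
  refine LipschitzWith.id.lipschitzOnWith.prodMk <|
    LipschitzOnWith.of_dist_le_mul fun z hz z' hz' => ?_
  rw [dist_eq_norm, dist_eq_norm]
  exact norm_wirtingerJet_cauchyPotential_sub_le_mul hf.norm_le hf.lipschitzWith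
    hf.support_subset hρA hρc hz hz'

lemma dist_prodMk_wirtingerJet_cauchyPotential_le
    (hf : IsAdmissible A L (closedBall 0 (ρ : ℝ)) f)
    (hg : IsAdmissible A L (closedBall 0 (ρ : ℝ)) g) (hρ : (ρ : ℝ) ≤ 1 / 2) {δ : ℝ}
    (hδ : ∀ z, dist (f z) (g z) ≤ δ) {z : ℂ} (hz : z ∈ closedBall 0 (ρ : ℝ)) :
    dist (z, wirtingerJet m (cauchyPotential μ c f) z)
      (z, wirtingerJet m (cauchyPotential μ c g) z) ≤ (8 * ρ : ℝ≥0) * δ := by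
  rw [dist_prod_same_left, dist_eq_norm]
  exact norm_wirtingerJet_cauchyPotential_sub_wirtingerJet_le hf.lipschitzWith hf.support_subset
    hg.lipschitzWith hg.support_subset hρ (fun z => by simpa [dist_eq_norm] using hδ z) hz

lemma exists_isAdmissible_eq_wirtingerJet_cauchyPotential {a : ℂ × (Idx m → E) → E}
    (ha : LipschitzOnWith K a (closedBall (0, c) r))
    (haA : ∀ y ∈ closedBall (0, c) (r : ℝ), ‖a y‖ ≤ A)
    (hρ0 : 0 < ρ) (hρ : (ρ : ℝ) ≤ 1 / 2) (hρr : (ρ : ℝ) ≤ r) (hρA : 8 * ρ * A ≤ (r : ℝ))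
    (hρc : 2 * (‖c‖ + r) * ρ ≤ r) (hρK : 16 * K * ρ ≤ (1 : ℝ)) :
    ∃ L f, IsAdmissible A L (closedBall 0 (ρ : ℝ)) f ∧ ∀ z ∈ closedBall 0 (ρ / 2 : ℝ),
      f z = a (z, wirtingerJet m (cauchyPotential μ c f) z) := by
  have : CompleteSpace E := FiniteDimensional.complete ℝ E
  obtain ⟨M, χ, hχ, hχ1, hχone, hχs⟩ :=
    exists_lipschitzWith_cutoff (0 : ℂ) (half_lt_self (NNReal.coe_pos.2 hρ0))
  obtain ⟨L, hL⟩ := exists_add_mul_max_le hρK (2 * (‖c‖₊ + r)) (M * A)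
  obtain ⟨f, hf, hfix⟩ := exists_isAdmissible_eq_smul ha haA
    (fun f hf => mapsTo_prodMk_wirtingerJet_cauchyPotential (μ := μ) hf hρr hρA hρc)
    (fun f hf => lipschitzOnWith_prodMk_wirtingerJet_cauchyPotential hf hρA hρc)
    (fun f hf g hg δ hδ z hz => dist_prodMk_wirtingerJet_cauchyPotential_le hf hg hρ hδ hz)
    hχ hχ1 hχs hL (by rw [← NNReal.coe_lt_coe]; push_cast; linarith)
  exact ⟨L, f, hf, fun z hz => by rw [hfix z, hχone z hz, one_smul]⟩

theorem local_existence_CR_system_general {ν : ℕ} (hm : 1 ≤ m) (hμν : μ + ν = m)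
    {a : ℂ × (Idx m → E) → E} {t : Set (ℂ × (Idx m → E))} (ht : t ∈ 𝓝 (0, c))
    (ha : LipschitzOnWith K a t) :
    ∃ R : ℝ, 0 < R ∧ ∃ u : ℂ → E, ContDiff ℝ m u ∧
      (∀ α ∈ Set.Ico (0 : ℝ) 1, ∀ i j : ℕ, i + j = m →
        HolV α (closedBall (0 : ℂ) R) (wDijv i j u) < ⊤) ∧
      (∀ z ∈ closedBall (0 : ℂ) R, wDijv μ ν u z = a (z, wirtingerJet m u z)) ∧
      wirtingerJet m u 0 = c := by
  obtain ⟨r, hr, hrt⟩ := nhds_basis_closedBall.mem_iff.1 ht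
  lift r to ℝ≥0 using hr.le
  replace ha := ha.mono hrt
  have haA : ∀ y ∈ closedBall (0, c) (r : ℝ), ‖a y‖ ≤ (‖a (0, c)‖₊ + K * r : ℝ≥0) := fun y hy => by
    have h := (ha.dist_le_mul y hy _ (mem_closedBall_self r.2)).trans
      (mul_le_mul_of_nonneg_left hy K.2)
    exact (norm_le_norm_add_norm_sub' _ (a (0, c))).trans
      (add_le_add_right ((dist_eq_norm _ _).symm.trans_le h) _)
  obtain ⟨ρ, hρ0, hρ, hρr, hρA, hρc, hρK⟩ :=
    exists_pos_radius hr (‖a (0, c)‖₊ + K * r : ℝ≥0) (‖c‖ + r) K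
  obtain ⟨L, f, hf, hsol⟩ := exists_isAdmissible_eq_wirtingerJet_cauchyPotential (μ := μ) ha haA
    hρ0 hρ hρr hρA hρc hρK
  refine ⟨ρ / 2, half_pos (NNReal.coe_pos.2 hρ0), cauchyPotential μ c f,
    contDiff_cauchyPotential hm hf.lipschitzWith hf.support_subset, fun α hα i j hij => ?_,
    fun z hz => ?_, wirtingerJet_cauchyPotential_zero hf.lipschitzWith hf.support_subset⟩
  · rw [wDijv_cauchyPotential hm hf.lipschitzWith hf.support_subset hij]
    exact HolV_wDbarv_cauchyTransform_lt_top hα _ hf.lipschitzWith hf.support_subset _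
  · rw [wDijv_cauchyPotential_self hm hμν hf.lipschitzWith hf.support_subset, hsol z hz]

end LocalExistence

/-- local existence for nonlinear systems
`∂^μ∂̄^ν u = a(z, (∂^i∂̄^j u)_{i+j≤m−1})` of Cauchy–Riemann operators of order
`m = μ + ν`, with prescribed derivatives of order `≤ m − 1` at the origin, the
right-hand side `a` being `C^1` with first derivatives locally `α`-Hölder. -/
theorem local_existence_CR_system (α : ℝ) (hα : α ∈ Set.Ioo (0:ℝ) 1)
    (n m μ ν : ℕ) (hn : 1 ≤ n) (hm : 1 ≤ m) (hμν : μ + ν = m)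
    (a : ℂ × (Idx m → Fin n → ℂ) → Fin n → ℂ)
    (ha1 : ContDiff ℝ 1 a)
    (ha2 : ∀ s : Set (ℂ × (Idx m → Fin n → ℂ)), Bornology.IsBounded s →
      ∃ M : ℝ, ∀ p ∈ s, ∀ q ∈ s, ‖fderiv ℝ a p - fderiv ℝ a q‖ ≤ M * ‖p - q‖ ^ α)
    (c : Idx m → Fin n → ℂ) :
    ∃ R : ℝ, 0 < R ∧ ∃ u : ℂ → Fin n → ℂ,
      (∃ U : Set ℂ, IsOpen U ∧ closedBall (0:ℂ) R ⊆ U ∧ ContDiffOn ℝ m u U) ∧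
      (∀ i j : ℕ, i + j = m → HolV α (closedBall (0:ℂ) R) (wDijv i j u) < ⊤) ∧
      (∀ z ∈ closedBall (0:ℂ) R,
        wDijv μ ν u z = a (z, fun p => wDijv (p.1.1 : ℕ) (p.1.2 : ℕ) u z)) ∧
      (∀ p : Idx m, wDijv (p.1.1 : ℕ) (p.1.2 : ℕ) u 0 = c p) := by
  obtain ⟨K, t, ht, hK⟩ := ha1.contDiffAt.exists_lipschitzOnWith (x := (0, c))
  obtain ⟨R, hR, u, hu, hHol, heq, h0⟩ := local_existence_CR_system_general hm hμν ht hK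
  exact ⟨R, hR, u, ⟨Set.univ, isOpen_univ, Set.subset_univ _, hu.contDiffOn⟩,
    fun i j hij => hHol α (Set.Ioo_subset_Ico_self hα) i j hij, heq, congrFun h0⟩
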